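/- arXiv:2505.20519 — 5 statements merged into one kernel-verified Lean document; each statement's English description precedes it below -/
import Mathlib

section
/- In the N-partite Bell scenario in which every party has two measurement settings and each measurement has two outcomes, every convexly extremal quantum correlation can be realized by performing local projective measurements on a pure state of N qubits, i.e. on the Hilbert space (ℂ²)^{⊗N}. -/
/-!
The set of quantum correlations is the convex hull of the set `QubitSet N` of correlations of
projective measurements on pure `N`-qubit states; extreme points of a convex hull lie in the
generating set, which is the claim.

The inclusion "hull ⊆ quantum" needs convexity of the quantum set, obtained by direct sums of local
spaces (`convex_quantumSet`). For "quantum ⊆ hull" (`quantumSet_subset_convexHull`), each party's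
pair of effects `E 0, E 1` is written as `E x = ∑ k, (V k)ᴴ * F k x * V k` with qubit projections
`F k x` and `∑ k, (V k)ᴴ * V k = 1` (`IsQubitCompression`). Tensoring these decompositions and
splitting the state into unnormalised pure states `ψ j` writes the correlation as a mixture of qubit
correlations, obtained from the vectors `(⊗ V) ψ j`.

The decomposition of a pair of effects is a form of Jordan's lemma. Decomposable pairs form a convex
set, and effects are mixtures of projections (`effect_mem_convexHull`), so the `E x` may be taken to
be projections. Let `A, B` be the corresponding reflections and `U = A * B`, a unitary with
`A * U * A = Uᴴ`. The isometry `v ↦ (v, A v) / √2` intertwines `A` with the swap and `U` with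
`U ⊕ Uᴴ`; diagonalising `U` splits this doubled space into qubits
(`isQubitCompression_of_proj`). Unlike the usual block decomposition, this requires neither induction
on the dimension nor a discussion of degenerate one-dimensional blocks.
-/

/- STATEMENT 0: in the N-partite Bell scenario where every party has two settings and
two outcomes, every convexly extremal quantum correlation is realizable by projective
measurements on a pure N-qubit state (all local Hilbert space dimensions equal 2). -/

open scoped BigOperators Kronecker Matrix ComplexOrder

noncomputable section

/-- `N`-fold tensor (Kronecker) product of square matrices, realized as a matrix on the
product index set: `(⊗ᵢ Mᵢ) (r, c) = ∏ i, Mᵢ (r i) (c i)`. -/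
def tensorN {N : ℕ} (d : Fin N → ℕ) (M : ∀ i, Matrix (Fin (d i)) (Fin (d i)) ℂ) :
    Matrix (∀ i, Fin (d i)) (∀ i, Fin (d i)) ℂ :=
  Matrix.of fun r c => ∏ i, M i (r i) (c i)

/-- A POVM: a finite family of positive semidefinite matrices summing to the identity. -/
def IsPOVM {n : Type*} [Fintype n] [DecidableEq n] {O : Type*} [Fintype O]
    (M : O → Matrix n n ℂ) : Prop :=
  (∀ a, (M a).PosSemidef) ∧ ∑ a, M a = 1

/-- A density matrix: positive semidefinite with unit trace. -/
def IsDensityMatrix {n : Type*} [Fintype n] [DecidableEq n] (ρ : Matrix n n ℂ) : Prop :=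
  ρ.PosSemidef ∧ ρ.trace = 1

/-- `Realizes x o d P`: the behaviour `P settings outcomes = P(a₁…a_N | x₁…x_N)` of the
`N`-partite Bell scenario in which party `i` has `x i` settings and `o i` outcomes is
realized by a density matrix and local POVMs, party `i` having local Hilbert space
dimension `d i`. -/
def Realizes {N : ℕ} (x o : Fin N → ℕ) (d : Fin N → ℕ)
    (P : (∀ i, Fin (x i)) → (∀ i, Fin (o i)) → ℝ) : Prop :=
  ∃ ρ : Matrix (∀ i, Fin (d i)) (∀ i, Fin (d i)) ℂ,
    IsDensityMatrix ρ ∧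
    ∃ M : ∀ i, Fin (x i) → Fin (o i) → Matrix (Fin (d i)) (Fin (d i)) ℂ,
      (∀ i xi, IsPOVM (M i xi)) ∧
      ∀ xs as, (P xs as : ℂ) = (ρ * tensorN d fun i => M i (xs i) (as i)).trace

/-- Realization by a pure state `ψ` (with `ρ = |ψ⟩⟨ψ|`) and local POVMs. -/
def RealizesPure {N : ℕ} (x o : Fin N → ℕ) (d : Fin N → ℕ)
    (P : (∀ i, Fin (x i)) → (∀ i, Fin (o i)) → ℝ) : Prop :=
  ∃ ψ : (∀ i, Fin (d i)) → ℂ,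
    (∑ p, Complex.normSq (ψ p)) = 1 ∧
    ∃ M : ∀ i, Fin (x i) → Fin (o i) → Matrix (Fin (d i)) (Fin (d i)) ℂ,
      (∀ i xi, IsPOVM (M i xi)) ∧
      ∀ xs as, (P xs as : ℂ) =
        (Matrix.vecMulVec ψ (star ψ) * tensorN d fun i => M i (xs i) (as i)).trace

/-- The set of all quantum correlations of the `N`-partite Bell scenario with `x i`
settings and `o i` outcomes for party `i`, with no restriction on the local Hilbert
space dimensions. -/
def QuantumSet {N : ℕ} (x o : Fin N → ℕ) :
    Set ((∀ i, Fin (x i)) → (∀ i, Fin (o i)) → ℝ) :=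
  {P | ∃ d, Realizes x o d P}

/-- Realization by projective measurements (Hermitian idempotent POVM elements) on a
pure state. -/
def RealizesPureProjective {N : ℕ} (x o : Fin N → ℕ) (d : Fin N → ℕ)
    (P : (∀ i, Fin (x i)) → (∀ i, Fin (o i)) → ℝ) : Prop :=
  ∃ ψ : (∀ i, Fin (d i)) → ℂ,
    (∑ p, Complex.normSq (ψ p)) = 1 ∧
    ∃ M : ∀ i, Fin (x i) → Fin (o i) → Matrix (Fin (d i)) (Fin (d i)) ℂ,
      (∀ i xi, IsPOVM (M i xi)) ∧
      (∀ i xi ai, (M i xi ai).IsHermitian ∧ M i xi ai * M i xi ai = M i xi ai) ∧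
      ∀ xs as, (P xs as : ℂ) =
        (Matrix.vecMulVec ψ (star ψ) * tensorN d fun i => M i (xs i) (as i)).trace

/-! ### Spectral preliminaries -/

open Module.End in
/-- Every unitary matrix is diagonalised by a unitary matrix, with eigenvalues on the circle. -/
theorem exists_unitary_diagonalization {n : ℕ} (U : Matrix (Fin n) (Fin n) ℂ)
    (h1 : Uᴴ * U = 1) (h2 : U * Uᴴ = 1) :
    ∃ (W : Matrix (Fin n) (Fin n) ℂ) (z : Fin n → ℂ), Wᴴ * W = 1 ∧
      (∀ k, star (z k) * z k = 1) ∧ U = Wᴴ * Matrix.diagonal z * W := by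
  classical
  set C : Matrix (Fin n) (Fin n) ℂ := U + Uᴴ with hC
  set S : Matrix (Fin n) (Fin n) ℂ := Complex.I • (U - Uᴴ) with hS
  have hCh : C.IsHermitian := by
    simp [Matrix.IsHermitian, hC, add_comm]
  have hSh : S.IsHermitian := by
    simp [Matrix.IsHermitian, hS, ← smul_neg]
  have hcomm : C * S = S * C := by
    simp only [hC, hS, Matrix.mul_smul, Matrix.smul_mul]
    congr 1
    simp only [mul_sub, add_mul, mul_add, sub_mul, h1, h2]
    abel
  have hCs := Matrix.isSymmetric_toEuclideanLin_iff.2 hCh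
  have hSs := Matrix.isSymmetric_toEuclideanLin_iff.2 hSh
  have hcomm' : Commute (Matrix.toEuclideanLin C) (Matrix.toEuclideanLin S) := by
    apply LinearMap.ext
    intro v
    simp [Matrix.toLpLin_apply, Matrix.mulVec_mulVec, hcomm]
  have hint := LinearMap.IsSymmetric.directSum_isInternal_of_commute hCs hSs hcomm'
  have horth := LinearMap.IsSymmetric.orthogonalFamily_eigenspace_inf_eigenspace hCs hSs
  have hint' := DirectSum.isInternal_ne_bot_iff.2 hint
  let := iSupIndep.fintypeNeBotOfFiniteDimensional hint.submodule_iSupIndep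
  have horth' := horth.comp (f := fun i : {i : ℂ × ℂ //
    eigenspace (Matrix.toEuclideanLin C) i.2 ⊓ eigenspace (Matrix.toEuclideanLin S) i.1 ≠ ⊥} =>
      (i : ℂ × ℂ)) Subtype.val_injective
  have hfr : Module.finrank ℂ (EuclideanSpace ℂ (Fin n)) = n := by simp
  set b := hint'.subordinateOrthonormalBasis hfr horth' with hb
  have hmem : ∀ k, ∃ z : ℂ, U *ᵥ (b k).ofLp = z • (b k).ofLp := by
    intro k
    have hk := hint'.subordinateOrthonormalBasis_subordinate hfr k horth'
    obtain ⟨hk1, hk2⟩ := Submodule.mem_inf.1 hk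
    rw [mem_eigenspace_iff] at hk1 hk2
    set c := (hint'.subordinateOrthonormalBasisIndex hfr k horth').1.2
    set s := (hint'.subordinateOrthonormalBasisIndex hfr k horth').1.1
    have e1 : C *ᵥ (b k).ofLp = c • (b k).ofLp := congrArg WithLp.ofLp hk1
    have e2 : S *ᵥ (b k).ofLp = s • (b k).ofLp := congrArg WithLp.ofLp hk2
    refine ⟨(c - Complex.I * s) / 2, ?_⟩
    have hU : U = (1 / 2 : ℂ) • (C - Complex.I • S) := by
      rw [hC, hS, smul_smul, Complex.I_mul_I]
      ext i j; simp; ring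
    rw [hU, Matrix.smul_mulVec, Matrix.sub_mulVec, Matrix.smul_mulVec, e1, e2, smul_smul,
      ← sub_smul, smul_smul]
    congr 1; ring
  choose z hz using hmem
  set Q : Matrix (Fin n) (Fin n) ℂ := Matrix.of fun i j => b j i with hQ
  have hQQ : Qᴴ * Q = 1 := by
    ext i j
    have := orthonormal_iff_ite.1 b.orthonormal i j
    rw [PiLp.inner_apply] at this
    simp only [Matrix.mul_apply, Matrix.conjTranspose_apply, hQ, Matrix.of_apply, Matrix.one_apply]
    rw [← this]
    simp [mul_comm]
  have hQQ' : Q * Qᴴ = 1 := mul_eq_one_comm.1 hQQ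
  have hUQ : U * Q = Q * Matrix.diagonal z := by
    ext i j
    have := congrFun (hz j) i
    simp only [Matrix.mul_diagonal]
    simpa [Matrix.mulVec, dotProduct, Matrix.mul_apply, hQ, mul_comm] using this
  have hD : Matrix.diagonal z = Qᴴ * U * Q := by
    rw [mul_assoc, hUQ, ← mul_assoc, hQQ, one_mul]
  have hDD : (Matrix.diagonal z)ᴴ * Matrix.diagonal z = 1 := by
    rw [hD]
    simp only [Matrix.conjTranspose_mul, Matrix.conjTranspose_conjTranspose]
    calc Qᴴ * (Uᴴ * Q) * (Qᴴ * U * Q) = Qᴴ * (Uᴴ * (Q * Qᴴ) * U) * Q := by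
          simp only [mul_assoc]
      _ = 1 := by rw [hQQ', mul_one, h1, mul_one, hQQ]
  refine ⟨Qᴴ, z, by simpa using hQQ', ?_, ?_⟩
  · intro k
    have := congrFun (congrFun hDD k) k
    simpa [Matrix.diagonal_conjTranspose, Matrix.diagonal_mul_diagonal] using this
  · rw [Matrix.conjTranspose_conjTranspose, ← hUQ, mul_assoc, hQQ', mul_one]

/-- Effects (matrices with `0 ≤ E ≤ 1`) are convex combinations of orthogonal projections. -/
theorem effect_mem_convexHull {n : ℕ} (E : Matrix (Fin n) (Fin n) ℂ)
    (h0 : E.PosSemidef) (h1 : (1 - E).PosSemidef) :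
    E ∈ convexHull ℝ {F : Matrix (Fin n) (Fin n) ℂ | F.IsHermitian ∧ F * F = F} := by
  classical
  have hE := h0.isHermitian
  have hsp := hE.spectral_theorem
  rw [Unitary.conjStarAlgAut_apply] at hsp
  set U : Matrix (Fin n) (Fin n) ℂ := (hE.eigenvectorUnitary : Matrix (Fin n) (Fin n) ℂ) with hU
  have hUU : Uᴴ * U = 1 := Unitary.coe_star_mul_self hE.eigenvectorUnitary
  have hUU' : U * Uᴴ = 1 := mul_eq_one_comm.1 hUU
  rw [Matrix.star_eq_conjTranspose] at hsp
  -- the linear map sending a spectrum to the matrix with that spectrum in the eigenbasis of `E`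
  let L : (Fin n → ℝ) →ₗ[ℝ] Matrix (Fin n) (Fin n) ℂ :=
    { toFun := fun μ => U * Matrix.diagonal (fun i => (μ i : ℂ)) * Uᴴ
      map_add' := fun x y => by
        simp only [Pi.add_apply, Complex.ofReal_add, ← Matrix.diagonal_add, mul_add, add_mul]
      map_smul' := fun c x => by
        have : Matrix.diagonal (fun i => (((c • x) i : ℝ) : ℂ))
            = c • Matrix.diagonal (fun i => (x i : ℂ)) := by
          ext i j; by_cases h : i = j <;> simp [Matrix.diagonal, h]
        rw [this]; simp }
  have hEL : E = L hE.eigenvalues := hsp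
  have hle : ∀ i, hE.eigenvalues i ≤ 1 := by
    have h2 := h1.mul_mul_conjTranspose_same Uᴴ
    have h3 : Uᴴ * (1 - E) * Uᴴᴴ = Matrix.diagonal (fun i => (1 : ℂ) - (hE.eigenvalues i : ℂ)) := by
      rw [Matrix.conjTranspose_conjTranspose, mul_sub, sub_mul, mul_one, hUU]
      conv_lhs => rw [hsp]
      rw [← Matrix.diagonal_sub, Matrix.diagonal_one]
      congr 1
      calc _ = (Uᴴ * U) * Matrix.diagonal (RCLike.ofReal ∘ hE.eigenvalues) * (Uᴴ * U) := by
            simp only [mul_assoc]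
        _ = _ := by rw [hUU, one_mul, mul_one]; rfl
    rw [h3, Matrix.posSemidef_diagonal_iff] at h2
    intro i
    have := h2 i
    rw [← Complex.ofReal_one, ← Complex.ofReal_sub, Complex.zero_le_real] at this
    linarith
  have hmem : hE.eigenvalues ∈ convexHull ℝ (Set.univ.pi fun _ : Fin n => ({0, 1} : Set ℝ)) := by
    rw [convexHull_pi]
    intro i _
    rw [convexHull_pair, segment_eq_Icc zero_le_one]
    exact ⟨h0.eigenvalues_nonneg i, hle i⟩
  rw [hEL]
  have := Set.mem_image_of_mem L hmem
  rw [LinearMap.image_convexHull] at this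
  refine convexHull_mono ?_ this
  rintro _ ⟨μ, hμ, rfl⟩
  have hμ' : ∀ i, (μ i : ℂ) * μ i = μ i := fun i => by
    have h : μ i = 0 ∨ μ i = 1 := hμ i trivial
    rcases h with h | h <;> rw [h] <;> norm_num
  constructor
  · change (U * Matrix.diagonal (fun i => (μ i : ℂ)) * Uᴴ)ᴴ = _
    simp only [Matrix.conjTranspose_mul, Matrix.conjTranspose_conjTranspose,
      Matrix.diagonal_conjTranspose, ← mul_assoc]
    congr 3
    ext i; simp
  · change U * Matrix.diagonal (fun i => (μ i : ℂ)) * Uᴴ *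
      (U * Matrix.diagonal (fun i => (μ i : ℂ)) * Uᴴ) = U * Matrix.diagonal (fun i => (μ i : ℂ)) * Uᴴ
    calc _ = U * Matrix.diagonal (fun i => (μ i : ℂ)) * (Uᴴ * U) *
          Matrix.diagonal (fun i => (μ i : ℂ)) * Uᴴ := by simp only [mul_assoc]
      _ = _ := by rw [hUU, mul_one, mul_assoc U, Matrix.diagonal_mul_diagonal]; simp only [hμ']

/-! ### Jordan's lemma: compression to qubits -/

/-- The pair of effects `E 0, E 1` is a finite sum of compressions of qubit projections:
`E x = ∑ k, (V k)ᴴ * F k x * V k` with `∑ k, (V k)ᴴ * V k = 1`. Equivalently, `k ↦ V k` is an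
isometry into a direct sum of qubits which dilates both effects to block-diagonal projections. -/
def IsQubitCompression {n : ℕ} (E : Fin 2 → Matrix (Fin n) (Fin n) ℂ) : Prop :=
  ∃ (ι : Type) (_ : Fintype ι) (V : ι → Matrix (Fin 2) (Fin n) ℂ)
    (F : ι → Fin 2 → Matrix (Fin 2) (Fin 2) ℂ),
    (∀ k x, (F k x).IsHermitian ∧ F k x * F k x = F k x) ∧
    ∑ k, (V k)ᴴ * V k = 1 ∧ ∀ x, E x = ∑ k, (V k)ᴴ * F k x * V k

theorem convex_isQubitCompression (n : ℕ) :
    Convex ℝ {E : Fin 2 → Matrix (Fin n) (Fin n) ℂ | IsQubitCompression E} := by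
  rintro E ⟨ι, _, V, F, hF, hV, hE⟩ E' ⟨ι', _, V', F', hF', hV', hE'⟩ a b ha hb hab
  have key : ∀ c : ℝ, 0 ≤ c → ∀ (X : Matrix (Fin 2) (Fin n) ℂ) (Y : Matrix (Fin 2) (Fin 2) ℂ),
      ((Real.sqrt c : ℂ) • X)ᴴ * Y * ((Real.sqrt c : ℂ) • X) = c • (Xᴴ * Y * X) := by
    intro c hc X Y
    have h : (Real.sqrt c : ℂ) * Real.sqrt c = c := by
      rw [← Complex.ofReal_mul, Real.mul_self_sqrt hc]
    rw [Matrix.conjTranspose_smul, Complex.star_def, Complex.conj_ofReal, Matrix.smul_mul,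
      Matrix.smul_mul, Matrix.mul_smul, smul_smul, h]
    rfl
  have key1 : ∀ c : ℝ, 0 ≤ c → ∀ (X : Matrix (Fin 2) (Fin n) ℂ),
      ((Real.sqrt c : ℂ) • X)ᴴ * ((Real.sqrt c : ℂ) • X) = c • (Xᴴ * X) := by
    intro c hc X
    simpa using key c hc X 1
  refine ⟨ι ⊕ ι', inferInstance,
    Sum.elim (fun k => (Real.sqrt a : ℂ) • V k) (fun k => (Real.sqrt b : ℂ) • V' k),
    Sum.elim F F', ?_, ?_, ?_⟩
  · rintro (k | k) x
    · exact hF k x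
    · exact hF' k x
  · simp only [Fintype.sum_sum_type, Sum.elim_inl, Sum.elim_inr, key1 a ha, key1 b hb,
      ← Finset.smul_sum, hV, hV', ← add_smul, hab, one_smul]
  · intro x
    simp only [Fintype.sum_sum_type, Sum.elim_inl, Sum.elim_inr, key a ha, key b hb,
      ← Finset.smul_sum, ← hE, ← hE', Pi.add_apply, Pi.smul_apply]

/-- The `2 × n` matrix whose rows are row `k` of `X` and row `k` of `Y`. -/
def twoRows {n : ℕ} (X Y : Matrix (Fin n) (Fin n) ℂ) (k : Fin n) : Matrix (Fin 2) (Fin n) ℂ :=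
  Matrix.of fun s j => ![X k j, Y k j] s

theorem sum_two_rows {n : ℕ} (X Y : Matrix (Fin n) (Fin n) ℂ)
    (G : Fin n → Matrix (Fin 2) (Fin 2) ℂ) :
    ∑ k, (twoRows X Y k)ᴴ * G k * twoRows X Y k =
      Xᴴ * Matrix.diagonal (fun k => G k 0 0) * X + Xᴴ * Matrix.diagonal (fun k => G k 0 1) * Y +
      Yᴴ * Matrix.diagonal (fun k => G k 1 0) * X + Yᴴ * Matrix.diagonal (fun k => G k 1 1) * Y := by
  ext i j
  simp only [Matrix.sum_apply, Matrix.add_apply]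
  rw [Matrix.mul_apply, Matrix.mul_apply, Matrix.mul_apply, Matrix.mul_apply]
  simp only [Matrix.mul_diagonal, ← Finset.sum_add_distrib]
  refine Finset.sum_congr rfl fun k _ => ?_
  simp [twoRows, Matrix.mul_apply, Fin.sum_univ_two]
  ring

/-- The qubit projection onto the `+1` eigenvector of the reflection `[[0, star z], [z, 0]]`. -/
def qubitProj (z : ℂ) : Matrix (Fin 2) (Fin 2) ℂ := !![1 / 2, star z / 2; z / 2, 1 / 2]

theorem qubitProj_isProj {z : ℂ} (hz : star z * z = 1) :
    (qubitProj z).IsHermitian ∧ qubitProj z * qubitProj z = qubitProj z := by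
  constructor
  · ext i j
    fin_cases i <;> fin_cases j <;> simp [qubitProj]
  · have hz' : (starRingEnd ℂ) z * z = 1 := hz
    ext i j
    fin_cases i <;> fin_cases j <;> simp [qubitProj, Matrix.mul_apply, Fin.sum_univ_two]
    · linear_combination (1 / 4 : ℂ) * hz'
    · ring
    · ring
    · linear_combination (1 / 4 : ℂ) * hz'

/-- Jordan's lemma for two projections. With the reflections `A = 2 E₀ - 1`, `B = 2 E₁ - 1` and the
unitary `U = A * B = Wᴴ diag(z) W`, the map `v ↦ ((W v) k, (W A v) k) / √2` intertwines `A` with the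
swap of the two coordinates and `U` with `diag(z k, star (z k))`. -/
theorem isQubitCompression_of_proj {n : ℕ} (E : Fin 2 → Matrix (Fin n) (Fin n) ℂ)
    (hE : ∀ x, (E x).IsHermitian ∧ E x * E x = E x) : IsQubitCompression E := by
  set R : Fin 2 → Matrix (Fin n) (Fin n) ℂ := fun x => (2 : ℂ) • E x - 1 with hR
  have hRh : ∀ x, (R x)ᴴ = R x := fun x => by
    simp only [hR, Matrix.conjTranspose_sub, Matrix.conjTranspose_smul, Matrix.conjTranspose_one,
      (hE x).1.eq]
    simp
  have hRR : ∀ x, R x * R x = 1 := fun x => by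
    simp only [hR, sub_mul, mul_sub, Matrix.smul_mul, Matrix.mul_smul, (hE x).2, one_mul, mul_one]
    module
  set A := R 0 with hA
  have hAA : A * A = 1 := hRR 0
  obtain ⟨W, z, hW, hz, hU⟩ := exists_unitary_diagonalization (A * R 1)
    (by rw [Matrix.conjTranspose_mul, hRh, hRh, mul_assoc, ← mul_assoc A, hRR, one_mul, hRR])
    (by rw [Matrix.conjTranspose_mul, hRh, hRh, mul_assoc, ← mul_assoc (R 1), hRR, one_mul, hRR])
  -- eigenvalues of `A * R x`, which is `1` for `x = 0`
  set y : Fin 2 → Fin n → ℂ := ![1, z] with hy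
  have hyy : ∀ x k, star (y x k) * y x k = 1 := by
    intro x k; fin_cases x
    · simp [hy]
    · exact hz k
  have hUy : ∀ x, A * R x = Wᴴ * Matrix.diagonal (y x) * W := by
    intro x; fin_cases x
    · have : y 0 = fun _ => 1 := rfl
      change A * R 0 = Wᴴ * Matrix.diagonal (y 0) * W
      rw [this, Matrix.diagonal_one, mul_one, hW, hRR]
    · exact hU
  set c : ℂ := (Real.sqrt (1 / 2) : ℂ) with hc
  have hcc : star c * c = 1 / 2 := by
    rw [hc, Complex.star_def, Complex.conj_ofReal, ← Complex.ofReal_mul,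
      Real.mul_self_sqrt (by norm_num)]
    norm_num
  have key : ∀ G : Fin n → Matrix (Fin 2) (Fin 2) ℂ,
      ∑ k, (c • twoRows W (W * A) k)ᴴ * G k * (c • twoRows W (W * A) k) =
      (1 / 2 : ℂ) • (Wᴴ * Matrix.diagonal (fun k => G k 0 0) * W +
        Wᴴ * Matrix.diagonal (fun k => G k 0 1) * W * A +
        A * (Wᴴ * Matrix.diagonal (fun k => G k 1 0) * W) +
        A * (Wᴴ * Matrix.diagonal (fun k => G k 1 1) * W) * A) := by
    intro G
    have h := sum_two_rows W (W * A) G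
    rw [Matrix.conjTranspose_mul, hRh] at h
    simp only [mul_assoc] at h ⊢
    rw [← h, Finset.smul_sum]
    refine Finset.sum_congr rfl fun k _ => ?_
    rw [Matrix.conjTranspose_smul]
    rw [Matrix.smul_mul, Matrix.smul_mul, Matrix.mul_smul, smul_smul, hcc]
  refine ⟨Fin n, inferInstance, fun k => c • twoRows W (W * A) k,
    fun k x => qubitProj (y x k), fun k x => qubitProj_isProj (hyy x k), ?_, ?_⟩
  · have h := key fun _ => 1
    simp only [Matrix.mul_one] at h
    rw [h]
    simp only [Matrix.one_apply_eq, Matrix.diagonal_one, mul_one, hW, hAA, ne_eq, zero_ne_one,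
      one_ne_zero, not_false_eq_true, Matrix.one_apply_ne, Matrix.diagonal_zero, mul_zero, zero_mul]
    module
  · intro x
    rw [key]
    have e1 : Matrix.diagonal (fun k => qubitProj (y x k) 0 0) =
        (1 / 2 : ℂ) • (1 : Matrix (Fin n) (Fin n) ℂ) := by
      ext i j; by_cases h : i = j <;> simp [Matrix.diagonal, qubitProj, h]
    have e4 : Matrix.diagonal (fun k => qubitProj (y x k) 1 1) =
        (1 / 2 : ℂ) • (1 : Matrix (Fin n) (Fin n) ℂ) := by
      ext i j; by_cases h : i = j <;> simp [Matrix.diagonal, qubitProj, h]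
    have e3 : Matrix.diagonal (fun k => qubitProj (y x k) 1 0) =
        (1 / 2 : ℂ) • Matrix.diagonal (y x) := by
      ext i j; by_cases h : i = j <;> simp [Matrix.diagonal, qubitProj, h]; ring
    have e2 : Matrix.diagonal (fun k => qubitProj (y x k) 0 1) =
        (1 / 2 : ℂ) • (Matrix.diagonal (y x))ᴴ := by
      ext i j; by_cases h : i = j <;> simp [Matrix.diagonal, qubitProj, h, Ne.symm]; ring
    have hU' : Wᴴ * (Matrix.diagonal (y x))ᴴ * W = R x * A := by
      have := congrArg Matrix.conjTranspose (hUy x)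
      simp only [Matrix.conjTranspose_mul, hRh, Matrix.conjTranspose_conjTranspose] at this
      rw [mul_assoc, ← this, hA, hRh]
    rw [e1, e2, e3, e4]
    simp only [Matrix.mul_smul, Matrix.smul_mul, mul_one, hW, hU', ← hUy]
    rw [mul_assoc (R x), ← mul_assoc A A (R x), hRR, one_mul, mul_one]
    simp only [hR]
    module

theorem isQubitCompression_of_effects {n : ℕ} (E : Fin 2 → Matrix (Fin n) (Fin n) ℂ)
    (h0 : ∀ x, (E x).PosSemidef) (h1 : ∀ x, (1 - E x).PosSemidef) : IsQubitCompression E := by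
  have hmem : E ∈ convexHull ℝ (Set.univ.pi fun _ : Fin 2 =>
      {F : Matrix (Fin n) (Fin n) ℂ | F.IsHermitian ∧ F * F = F}) := by
    rw [convexHull_pi]
    exact fun x _ => effect_mem_convexHull (E x) (h0 x) (h1 x)
  exact convexHull_min (fun F hF => isQubitCompression_of_proj F fun x => Set.mem_univ_pi.1 hF x)
    (convex_isQubitCompression n) hmem

/-! ### Tensor products of rectangular matrices -/

/-- `N`-fold tensor product of rectangular matrices; `tensorN` is the square case. -/
def tens {N : ℕ} {α β : Fin N → Type} (M : ∀ i, Matrix (α i) (β i) ℂ) : Matrix (∀ i, α i) (∀ i, β i) ℂ :=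
  Matrix.of fun r c => ∏ i, M i (r i) (c i)

theorem tens_mul {N : ℕ} {α β γ : Fin N → Type} [∀ i, Fintype (β i)]
    (A : ∀ i, Matrix (α i) (β i) ℂ) (B : ∀ i, Matrix (β i) (γ i) ℂ) :
    tens A * tens B = tens fun i => A i * B i := by
  classical
  ext r c
  simp only [tens, Matrix.mul_apply, Matrix.of_apply, ← Finset.prod_mul_distrib]
  rw [Fintype.prod_sum]

theorem tens_conjTranspose {N : ℕ} {α β : Fin N → Type} (A : ∀ i, Matrix (α i) (β i) ℂ) :
    (tens A)ᴴ = tens fun i => (A i)ᴴ := by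
  ext r c
  simp [tens, Matrix.conjTranspose_apply]

theorem tens_sum {N : ℕ} {α β : Fin N → Type} {ι : Fin N → Type} [∀ i, Fintype (ι i)]
    (A : ∀ i, ι i → Matrix (α i) (β i) ℂ) :
    (tens fun i => ∑ k, A i k) = ∑ κ : ∀ i, ι i, tens fun i => A i (κ i) := by
  classical
  ext r c
  simp only [tens, Matrix.sum_apply, Matrix.of_apply]
  rw [Fintype.prod_sum]

theorem tens_one {N : ℕ} {α : Fin N → Type} [∀ i, DecidableEq (α i)] :
    (tens fun i => (1 : Matrix (α i) (α i) ℂ)) = 1 := by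
  ext r c
  simp only [tens, Matrix.of_apply, Matrix.one_apply, Fintype.prod_ite_zero, funext_iff]
  simp

/-! ### Positive semidefinite matrices -/

theorem posSemidef_of_isProj {m : Type*} [Fintype m] {F : Matrix m m ℂ} (h1 : F.IsHermitian)
    (h2 : F * F = F) : F.PosSemidef := by
  have := Matrix.posSemidef_conjTranspose_mul_self F
  rwa [h1.eq, h2] at this

open scoped MatrixOrder in
theorem exists_eq_conjTranspose_mul_self {m : Type*} [Fintype m] [DecidableEq m]
    {A : Matrix m m ℂ} (h : A.PosSemidef) : ∃ B : Matrix m m ℂ, A = Bᴴ * B :=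
  (CStarAlgebra.nonneg_iff_eq_star_mul_self (a := A)).1 h.nonneg

/-- A density matrix is a sum of unnormalised pure states. -/
theorem exists_eq_sum_vecMulVec {m : Type*} [Fintype m] [DecidableEq m]
    {A : Matrix m m ℂ} (h : A.PosSemidef) :
    ∃ ψ : m → m → ℂ, A = ∑ j, Matrix.vecMulVec (ψ j) (star (ψ j)) := by
  obtain ⟨B, hB⟩ := exists_eq_conjTranspose_mul_self h
  refine ⟨fun j i => star (B j i), ?_⟩
  rw [hB]
  ext r c
  simp [Matrix.sum_apply, Matrix.mul_apply, Matrix.vecMulVec_apply]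

/-! ### Qubit correlations and their convex hull -/

/-- The correlations of projective measurements on pure `N`-qubit states. -/
def QubitSet (N : ℕ) : Set ((∀ _ : Fin N, Fin 2) → (∀ _ : Fin N, Fin 2) → ℝ) :=
  {P | RealizesPureProjective (fun _ : Fin N => 2) (fun _ : Fin N => 2) (fun _ : Fin N => 2) P}

theorem trace_vecMulVec_star {m : Type*} [Fintype m] (φ : m → ℂ) :
    (Matrix.vecMulVec φ (star φ)).trace = ((∑ p, Complex.normSq (φ p) : ℝ) : ℂ) := by
  rw [Matrix.trace_vecMulVec, dotProduct, Complex.ofReal_sum]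
  exact Finset.sum_congr rfl fun p _ => by simp [Complex.normSq_eq_conj_mul_self, mul_comm]

/-- Projective measurements on an unnormalised `N`-qubit vector `φ` give `‖φ‖²` times a qubit
correlation; this includes `φ = 0`. -/
theorem exists_mem_qubitSet {N : ℕ} (φ : (∀ _ : Fin N, Fin 2) → ℂ)
    (M : ∀ _ : Fin N, Fin 2 → Fin 2 → Matrix (Fin 2) (Fin 2) ℂ)
    (hM : ∀ i x, IsPOVM (M i x))
    (hM' : ∀ i x a, (M i x a).IsHermitian ∧ M i x a * M i x a = M i x a) :
    ∃ Q ∈ QubitSet N, ∀ xs as : (∀ _ : Fin N, Fin 2),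
      (Matrix.vecMulVec φ (star φ) *
        tensorN (fun _ : Fin N => 2) fun i => M i (xs i) (as i)).trace =
      ((∑ p, Complex.normSq (φ p) : ℝ) : ℂ) * (Q xs as : ℂ) := by
  have hreal : ∀ (ψ : (∀ _ : Fin N, Fin 2) → ℂ) (xs as : (∀ _ : Fin N, Fin 2)), ∃ q : ℝ,
      (q : ℂ) = (Matrix.vecMulVec ψ (star ψ) *
        tensorN (fun _ : Fin N => 2) fun i => M i (xs i) (as i)).trace := by
    intro ψ xs as
    set T := tensorN (fun _ : Fin N => 2) fun i => M i (xs i) (as i) with hT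
    have hTh : Tᴴ = T := by
      have h := tens_conjTranspose (fun i => M i (xs i) (as i))
      simp only [(hM' _ _ _).1.eq] at h
      exact h
    obtain ⟨q, hq⟩ := Complex.conj_eq_iff_real.1
      (show (starRingEnd ℂ) (Matrix.vecMulVec ψ (star ψ) * T).trace =
          (Matrix.vecMulVec ψ (star ψ) * T).trace by
        rw [← Complex.star_def, ← Matrix.trace_conjTranspose, Matrix.conjTranspose_mul, hTh,
          Matrix.conjTranspose_vecMulVec, star_star, Matrix.trace_mul_comm])
    exact ⟨q, hq.symm⟩
  have hmem : ∀ ψ : (∀ _ : Fin N, Fin 2) → ℂ, (∑ p, Complex.normSq (ψ p)) = 1 →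
      ∃ Q ∈ QubitSet N, ∀ xs as : (∀ _ : Fin N, Fin 2), (Q xs as : ℂ) =
        (Matrix.vecMulVec ψ (star ψ) *
          tensorN (fun _ : Fin N => 2) fun i => M i (xs i) (as i)).trace := by
    intro ψ hψ
    choose Q hQ using hreal ψ
    exact ⟨Q, ⟨ψ, hψ, M, hM, hM', hQ⟩, hQ⟩
  set s := ∑ p, Complex.normSq (φ p) with hs
  have hs0 : 0 ≤ s := Finset.sum_nonneg fun p _ => Complex.normSq_nonneg _
  rcases hs0.eq_or_lt with h0 | hpos
  · have hφ : φ = 0 := by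
      funext p
      have := (Finset.sum_eq_zero_iff_of_nonneg fun p _ => Complex.normSq_nonneg _).1 h0.symm p
        (Finset.mem_univ p)
      simpa using this
    obtain ⟨Q, hQ, -⟩ := hmem (Pi.single 0 1) (by
      rw [Finset.sum_eq_single 0] <;> simp +contextual)
    refine ⟨Q, hQ, fun xs as => ?_⟩
    rw [← h0, hφ]
    simp
  · set c : ℝ := Real.sqrt s with hc
    have hcc : c * c = s := Real.mul_self_sqrt hs0
    have hc0 : (c : ℂ) ≠ 0 := by
      have : c ≠ 0 := (Real.sqrt_pos.2 hpos).ne'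
      exact_mod_cast this
    obtain ⟨Q, hQ, hQe⟩ := hmem ((c : ℂ)⁻¹ • φ) (by
      simp only [Pi.smul_apply, smul_eq_mul, Complex.normSq_mul, ← Finset.mul_sum, ← hs,
        Complex.normSq_inv, Complex.normSq_ofReal, hcc]
      exact inv_mul_cancel₀ hpos.ne')
    refine ⟨Q, hQ, fun xs as => ?_⟩
    rw [hQe, star_smul, Matrix.smul_vecMulVec, Matrix.vecMulVec_smul, Matrix.smul_mul,
      Matrix.smul_mul, Matrix.trace_smul, Matrix.trace_smul, ← hcc, Complex.star_def, map_inv₀,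
      Complex.conj_ofReal]
    push_cast
    simp only [smul_eq_mul]
    field_simp

theorem isPOVM_of_isProj {n : Type*} [Fintype n] [DecidableEq n] {F : Matrix n n ℂ}
    (h1 : F.IsHermitian) (h2 : F * F = F) :
    IsPOVM ![F, 1 - F] ∧ ∀ a : Fin 2, (![F, 1 - F] a).IsHermitian ∧
      ![F, 1 - F] a * ![F, 1 - F] a = ![F, 1 - F] a := by
  have h : ∀ a : Fin 2, (![F, 1 - F] a).IsHermitian ∧
      ![F, 1 - F] a * ![F, 1 - F] a = ![F, 1 - F] a := by
    intro a
    fin_cases a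
    · exact ⟨h1, h2⟩
    · refine ⟨Matrix.isHermitian_one.sub h1, ?_⟩
      simp [mul_sub, sub_mul, h2]
  refine ⟨⟨fun a => posSemidef_of_isProj (h a).1 (h a).2, ?_⟩, h⟩
  simp [Fin.sum_univ_two]

theorem trace_compression {m n : Type*} [Fintype m] [Fintype n] (X : Matrix n n ℂ)
    (T : Matrix m n ℂ) (G : Matrix m m ℂ) : (X * (Tᴴ * G * T)).trace = (T * X * Tᴴ * G).trace := by
  rw [Matrix.mul_assoc T X, Matrix.mul_assoc T, Matrix.trace_mul_comm T]
  simp only [Matrix.mul_assoc]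

/-- Every quantum correlation is a mixture of correlations of projective measurements on pure
qubit states: each party's Hilbert space is compressed into a sum of qubits. -/
theorem quantumSet_subset_convexHull (N : ℕ) :
    QuantumSet (fun _ : Fin N => 2) (fun _ : Fin N => 2) ⊆ convexHull ℝ (QubitSet N) := by
  rintro P ⟨d, ρ, ⟨hρ, hρ1⟩, M, hM, hP⟩
  have hM1 : ∀ i x, M i x 1 = 1 - M i x 0 := fun i x => by
    have := (hM i x).2
    rw [Fin.sum_univ_two] at this
    rw [← this, add_sub_cancel_left]
  have hcomp : ∀ i, IsQubitCompression fun x => M i x 0 := fun i =>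
    isQubitCompression_of_effects _ (fun x => (hM i x).1 0) fun x => hM1 i x ▸ (hM i x).1 1
  choose ι _ V F hF hV hE using hcomp
  set Φ : ∀ i, ι i → Fin 2 → Fin 2 → Matrix (Fin 2) (Fin 2) ℂ :=
    fun i k x => ![F i k x, 1 - F i k x] with hΦ
  have hMΦ : ∀ i x a, M i x a = ∑ k, (V i k)ᴴ * Φ i k x a * V i k := by
    intro i x a
    fin_cases a
    · exact hE i x
    · change M i x 1 = ∑ k, (V i k)ᴴ * (1 - F i k x) * V i k
      rw [hM1, show M i x 0 = _ from hE i x, ← hV i, ← Finset.sum_sub_distrib]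
      exact Finset.sum_congr rfl fun k _ => by
        rw [Matrix.mul_sub, Matrix.sub_mul, Matrix.mul_one]
  obtain ⟨ψ, hψ⟩ := exists_eq_sum_vecMulVec hρ
  set φ : (∀ i, ι i) → (∀ i, Fin (d i)) → (∀ _ : Fin N, Fin 2) → ℂ :=
    fun κ j => (tens fun i => V i (κ i)) *ᵥ ψ j with hφ
  have hvec : ∀ κ j, Matrix.vecMulVec (φ κ j) (star (φ κ j)) =
      (tens fun i => V i (κ i)) * Matrix.vecMulVec (ψ j) (star (ψ j)) *
        (tens fun i => V i (κ i))ᴴ := by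
    intro κ j
    rw [Matrix.mul_vecMulVec, Matrix.vecMulVec_mul, Matrix.star_mulVec]
  -- expand the trace over the state decomposition and over the tensor product of the compressions
  have hexp : ∀ G : ∀ i, ι i → Matrix (Fin 2) (Fin 2) ℂ,
      (ρ * tens fun i => ∑ k, (V i k)ᴴ * G i k * V i k).trace =
      ∑ κj : (∀ i, ι i) × (∀ i, Fin (d i)),
        (Matrix.vecMulVec (φ κj.1 κj.2) (star (φ κj.1 κj.2)) *
          tens fun i => G i (κj.1 i)).trace := by
    intro G
    rw [tens_sum, hψ, Fintype.sum_prod_type, Matrix.mul_sum, Matrix.trace_sum]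
    refine Finset.sum_congr rfl fun κ _ => ?_
    rw [Matrix.sum_mul, Matrix.trace_sum]
    refine Finset.sum_congr rfl fun j _ => ?_
    rw [hvec, ← tens_mul, ← tens_mul, ← tens_conjTranspose, trace_compression]
  have hproj := fun i k x => isPOVM_of_isProj (hF i k x).1 (hF i k x).2
  choose Q hQ hQe using fun κj : (∀ i, ι i) × (∀ i, Fin (d i)) =>
    exists_mem_qubitSet (φ κj.1 κj.2) (fun i => Φ i (κj.1 i))
      (fun i x => (hproj i (κj.1 i) x).1) (fun i x => (hproj i (κj.1 i) x).2)
  set w : (∀ i, ι i) × (∀ i, Fin (d i)) → ℝ :=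
    fun κj => ∑ p, Complex.normSq (φ κj.1 κj.2 p) with hw
  have hw1 : ∑ κj, w κj = 1 := by
    have h := hexp fun _ _ => 1
    simp only [Matrix.mul_one, hV, tens_one, hρ1, trace_vecMulVec_star] at h
    rw [← Complex.ofReal_sum] at h
    exact_mod_cast h.symm
  have hPsum : P = ∑ κj, w κj • Q κj := by
    funext xs as
    apply Complex.ofReal_injective
    have h := hexp fun i k => Φ i k (xs i) (as i)
    simp only [← hMΦ] at h
    rw [hP xs as]
    refine Eq.trans h ?_
    simp only [Finset.sum_apply, Pi.smul_apply, smul_eq_mul, Complex.ofReal_sum,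
      Complex.ofReal_mul]
    exact Finset.sum_congr rfl fun κj _ => hQe κj xs as
  rw [hPsum]
  exact (convex_convexHull ℝ _).sum_mem
    (fun κj _ => Finset.sum_nonneg fun p _ => Complex.normSq_nonneg _) hw1
    fun κj _ => subset_convexHull ℝ _ (hQ κj)

theorem qubitSet_subset_quantumSet (N : ℕ) :
    QubitSet N ⊆ QuantumSet (fun _ : Fin N => 2) (fun _ : Fin N => 2) := by
  rintro P ⟨ψ, hψ, M, hM, -, hP⟩
  refine ⟨fun _ => 2, _, ⟨Matrix.posSemidef_vecMulVec_self_star ψ, ?_⟩, M, hM, hP⟩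
  rw [trace_vecMulVec_star, hψ, Complex.ofReal_one]

/-- Mixtures of quantum correlations are quantum: put the two realizations in orthogonal blocks of
the local spaces `ℂ^(d₁ i + d₂ i)`. -/
theorem convex_quantumSet {N : ℕ} (x o : Fin N → ℕ) : Convex ℝ (QuantumSet x o) := by
  rintro P ⟨d, ρ, ⟨hρ, hρ1⟩, M, hM, hP⟩ P' ⟨d', ρ', ⟨hρ', hρ1'⟩, M', hM', hP'⟩ a b ha hb hab
  -- isometric embeddings of the two local spaces
  set v : ∀ i, Matrix (Fin (d i + d' i)) (Fin (d i)) ℂ :=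
    fun i => Matrix.of fun r c => if r = Fin.castAdd (d' i) c then 1 else 0 with hv
  set v' : ∀ i, Matrix (Fin (d i + d' i)) (Fin (d' i)) ℂ :=
    fun i => Matrix.of fun r c => if r = Fin.natAdd (d i) c then 1 else 0 with hv'
  have h11 : ∀ i, (v i)ᴴ * v i = 1 := fun i => by
    ext r c
    simp [hv, Matrix.mul_apply, Matrix.one_apply, eq_comm]
  have h22 : ∀ i, (v' i)ᴴ * v' i = 1 := fun i => by
    ext r c
    simp [hv', Matrix.mul_apply, Matrix.one_apply, eq_comm]
  have h12 : ∀ i, (v i)ᴴ * v' i = 0 := fun i => by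
    ext r c
    have := r.2
    simp only [hv, hv', Matrix.mul_apply, Matrix.conjTranspose_apply, Matrix.of_apply,
      Matrix.zero_apply]
    refine Finset.sum_eq_zero fun j _ => ?_
    simp [Fin.ext_iff]
    omega
  have h21 : ∀ i, (v' i)ᴴ * v i = 0 := fun i => by
    have := congrArg Matrix.conjTranspose (h12 i)
    simpa using this
  have hsum : ∀ i, v i * (v i)ᴴ + v' i * (v' i)ᴴ = 1 := fun i => by
    have h1 : (1 : Matrix (Fin (d i + d' i)) (Fin (d i + d' i)) ℂ) * 1ᴴ = 1 := by simp
    rw [← h1]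
    ext r c
    rw [Matrix.add_apply, Matrix.mul_apply, Matrix.mul_apply, Matrix.mul_apply, Fin.sum_univ_add]
    simp only [hv, hv', Matrix.of_apply, Matrix.conjTranspose_apply, Matrix.one_apply]
  set K : ∀ i, Fin (x i) → Fin (o i) → Matrix (Fin (d i + d' i)) (Fin (d i + d' i)) ℂ :=
    fun i xi ai => v i * M i xi ai * (v i)ᴴ + v' i * M' i xi ai * (v' i)ᴴ with hK
  have hK1 : ∀ i xi ai, (v i)ᴴ * K i xi ai * v i = M i xi ai := fun i xi ai => by
    calc _ = ((v i)ᴴ * v i) * M i xi ai * ((v i)ᴴ * v i) +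
          ((v i)ᴴ * v' i) * M' i xi ai * ((v' i)ᴴ * v i) := by
            simp only [hK, Matrix.mul_add, Matrix.add_mul, Matrix.mul_assoc]
      _ = _ := by rw [h11, h12]; simp
  have hK2 : ∀ i xi ai, (v' i)ᴴ * K i xi ai * v' i = M' i xi ai := fun i xi ai => by
    calc _ = ((v' i)ᴴ * v i) * M i xi ai * ((v i)ᴴ * v' i) +
          ((v' i)ᴴ * v' i) * M' i xi ai * ((v' i)ᴴ * v' i) := by
            simp only [hK, Matrix.mul_add, Matrix.add_mul, Matrix.mul_assoc]
      _ = _ := by rw [h22, h21]; simp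
  have hT1 : (tens v)ᴴ * tens v = 1 := by
    rw [tens_conjTranspose, tens_mul]; simp only [h11, tens_one]
  have hT2 : (tens v')ᴴ * tens v' = 1 := by
    rw [tens_conjTranspose, tens_mul]; simp only [h22, tens_one]
  refine ⟨fun i => d i + d' i,
    a • (tens v * ρ * (tens v)ᴴ) + b • (tens v' * ρ' * (tens v')ᴴ), ⟨?_, ?_⟩, K, ?_, ?_⟩
  · exact ((hρ.mul_mul_conjTranspose_same _).smul ha).add
      ((hρ'.mul_mul_conjTranspose_same _).smul hb)
  · rw [Matrix.trace_add, Matrix.trace_smul, Matrix.trace_smul, Matrix.trace_mul_comm,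
      ← Matrix.mul_assoc, hT1, Matrix.trace_mul_comm (tens v' * ρ'), ← Matrix.mul_assoc, hT2,
      Matrix.one_mul, Matrix.one_mul, hρ1, hρ1', ← add_smul, hab, one_smul]
  · refine fun i xi => ⟨fun ai => (((hM i xi).1 ai).mul_mul_conjTranspose_same _).add
      (((hM' i xi).1 ai).mul_mul_conjTranspose_same _), ?_⟩
    simp only [hK, Finset.sum_add_distrib, ← Matrix.mul_sum, ← Matrix.sum_mul, (hM i xi).2,
      (hM' i xi).2, Matrix.mul_one, hsum]
  · intro xs as
    have e1 : (tens v * ρ * (tens v)ᴴ * tens fun i => K i (xs i) (as i)).trace = P xs as := by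
      rw [hP xs as, Matrix.mul_assoc, Matrix.mul_assoc, Matrix.trace_mul_comm, Matrix.mul_assoc,
        tens_conjTranspose, tens_mul, tens_mul]
      simp only [hK1]
      rfl
    have e2 : (tens v' * ρ' * (tens v')ᴴ * tens fun i => K i (xs i) (as i)).trace = P' xs as := by
      rw [hP' xs as, Matrix.mul_assoc, Matrix.mul_assoc, Matrix.trace_mul_comm, Matrix.mul_assoc,
        tens_conjTranspose, tens_mul, tens_mul]
      simp only [hK2]
      rfl
    change _ = ((a • (tens v * ρ * (tens v)ᴴ) + b • (tens v' * ρ' * (tens v')ᴴ)) *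
      tens fun i => K i (xs i) (as i)).trace
    rw [Matrix.add_mul, Matrix.smul_mul, Matrix.smul_mul, Matrix.trace_add, Matrix.trace_smul,
      Matrix.trace_smul, e1, e2]
    simp

theorem extremal_correlations_realizable_with_qubits (N : ℕ)
    (P : (∀ _ : Fin N, Fin 2) → (∀ _ : Fin N, Fin 2) → ℝ)
    (hP : P ∈ Set.extremePoints ℝ (QuantumSet (fun _ : Fin N => 2) (fun _ : Fin N => 2))) :
    RealizesPureProjective (fun _ : Fin N => 2) (fun _ : Fin N => 2) (fun _ : Fin N => 2) P := by
  have h : QuantumSet (fun _ : Fin N => 2) (fun _ : Fin N => 2) = convexHull ℝ (QubitSet N) :=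
    (quantumSet_subset_convexHull N).antisymm
      (convexHull_min (qubitSet_subset_quantumSet N) (convex_quantumSet _ _))
  rw [h] at hP
  exact (extremePoints_convexHull_subset hP : P ∈ QubitSet N)
end
end

section
/- Consider an N-partite Bell scenario in which one distinguished party (Alice) has exactly two measurement settings, each with two outcomes, while the remaining parties have arbitrary finite numbers of settings and outcomes. If a quantum correlation in this scenario is convexly extremal, then it can be realized by a quantum model in which Alice's local Hilbert space has dimension 2 (the other parties' Hilbert spaces being arbitrary). -/
/-!
Masanes' reduction: the extremal correlations are reached by restricting Alice to a block of
Jordan's decomposition of two projections.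

Extremality enters through one principle (`eq_of_mixture`): if the correlation is a mixture, with
weights strictly between 0 and 1, of the correlations of two models, then each of these models
already realizes it.

* Alice's effects may be taken projective (`exists_projective`). An effect `E` with support
  projection `B` satisfies `E = t B + (1 - t) F` with `F` again an effect, for every small `t > 0`.
  Each correlation entry is linear in the single effect of Alice that it involves, so the same `t`
  splits the whole correlation, and `E` can be replaced by `B` for all settings at once.
* Two projections `P` and `Q` both commute with `(P - Q) ^ 2`, so its eigenspaces have bases of
  vectors `v` with `P v = ε v`. For such a `v` the span of `v` and `Q v` is invariant under both
  projections. The rank-one projectors onto these vectors (suitably scaled) sum to the identity,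
  so some block is not orthogonal to Alice's reduced state (`exists_jordan`).
* The projection `Π` onto that block commutes with all of Alice's effects, so the correlation is
  the mixture of those of the state compressed by `Π` and by `1 - Π`. The former has nonzero
  weight, hence realizes the correlation, and it lives on a block of dimension at most two
  (`realizes_compress`). The block is the range of a partial isometry `V` defined on `ℂ²`, so that
  a one-dimensional block needs no separate treatment: the defect `1 - Vᴴ V` is added to one of the
  effects.
-/

/- STATEMENT 1 (Masanes): in an N-partite Bell scenario in which the distinguished party
`0` (Alice) has exactly two settings with two outcomes each (the other parties having
arbitrary finite numbers of settings and outcomes), every convexly extremal quantum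
correlation is realizable by a model in which Alice's local Hilbert space dimension is 2
(the other parties' local dimensions being arbitrary). -/

open scoped BigOperators Kronecker Matrix ComplexOrder

noncomputable section

/-! ### Spectral and polar decompositions of matrices -/

lemma exists_spectral {m : Type*} [Fintype m] [DecidableEq m] {A : Matrix m m ℂ}
    (hA : A.IsHermitian) :
    ∃ U : Matrix m m ℂ, Uᴴ * U = 1 ∧ U * Uᴴ = 1 ∧
      A = U * Matrix.diagonal (fun i => (hA.eigenvalues i : ℂ)) * Uᴴ := by
  refine ⟨hA.eigenvectorUnitary, ?_, ?_, ?_⟩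
  · exact Unitary.coe_star_mul_self hA.eigenvectorUnitary
  · exact Unitary.coe_mul_star_self hA.eigenvectorUnitary
  · have h := hA.spectral_theorem
    rw [Unitary.conjStarAlgAut_apply] at h
    exact h

lemma exists_gram {m : Type*} [Fintype m] [DecidableEq m] {A : Matrix m m ℂ}
    (hA : A.PosSemidef) : ∃ B : Matrix m m ℂ, A = Bᴴ * B := by
  open scoped MatrixOrder in
  exact CStarAlgebra.nonneg_iff_eq_star_mul_self.mp hA.nonneg

/-- A projection: a Hermitian idempotent matrix. -/
def IsProjMat {m : Type*} [Fintype m] (B : Matrix m m ℂ) : Prop :=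
  Bᴴ = B ∧ B * B = B

lemma IsProjMat.posSemidef {m : Type*} [Fintype m] [DecidableEq m] {B : Matrix m m ℂ}
    (h : IsProjMat B) : B.PosSemidef := by
  have := Matrix.posSemidef_conjTranspose_mul_self B
  rwa [h.1, h.2] at this

lemma IsProjMat.one_sub {m : Type*} [Fintype m] [DecidableEq m] {B : Matrix m m ℂ}
    (h : IsProjMat B) : IsProjMat (1 - B) := by
  refine ⟨by simp [h.1], ?_⟩
  simp [sub_mul, mul_sub, h.2]

/-- An effect `E` is, for all small `t > 0`, the mixture with weights `t` and `1 - t` of a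
projection `B` (the support projection of `E`) and another effect. -/
lemma exists_support {m : Type*} [Fintype m] [DecidableEq m] {E : Matrix m m ℂ}
    (h0 : E.PosSemidef) (h1 : (1 - E).PosSemidef) :
    ∃ B : Matrix m m ℂ, IsProjMat B ∧ ∀ᶠ t : ℝ in nhdsWithin 0 (Set.Ioi 0),
      (E - (t : ℂ) • B).PosSemidef ∧ ((1 - E) - (t : ℂ) • (1 - B)).PosSemidef := by
  obtain ⟨U, hU, hU', hE⟩ := exists_spectral h0.1
  set l := h0.1.eigenvalues
  have hl0 : ∀ i, 0 ≤ l i := h0.eigenvalues_nonneg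
  have hl1 : ∀ i, l i ≤ 1 := by
    have h := h1.conjTranspose_mul_mul_same U
    have h2 : Uᴴ * (1 - E) * U = Matrix.diagonal (fun i => ((1 - l i : ℝ) : ℂ)) := by
      calc Uᴴ * (1 - E) * U
          = Uᴴ * U - (Uᴴ * U) * Matrix.diagonal (fun i => (l i : ℂ)) * (Uᴴ * U) := by
            rw [hE]; noncomm_ring
        _ = _ := by
            rw [hU]
            rw [one_mul, mul_one, ← Matrix.diagonal_one, Matrix.diagonal_sub]
            simp
    rw [h2, Matrix.posSemidef_diagonal_iff] at h
    intro i
    have := h i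
    rw [Complex.zero_le_real] at this
    linarith
  have key : ∀ f : m → ℝ, (∀ i, 0 ≤ f i) →
      (U * Matrix.diagonal (fun i => (f i : ℂ)) * Uᴴ).PosSemidef := by
    intro f hf
    refine Matrix.PosSemidef.mul_mul_conjTranspose_same ?_ U
    rw [Matrix.posSemidef_diagonal_iff]
    intro i
    rw [Complex.zero_le_real]
    exact hf i
  let b : m → ℝ := fun i => if l i = 0 then 0 else 1
  have hone : (1 : Matrix m m ℂ) = U * Matrix.diagonal (fun i => ((1 : ℝ) : ℂ)) * Uᴴ := by
    simp [hU']
  refine ⟨U * Matrix.diagonal (fun i => (b i : ℂ)) * Uᴴ, ⟨?_, ?_⟩, ?_⟩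
  · simp only [Matrix.conjTranspose_mul, Matrix.conjTranspose_conjTranspose,
      Matrix.diagonal_conjTranspose, mul_assoc]
    congr 3
    ext i
    simp
  · calc _ = U * (Matrix.diagonal (fun i => (b i : ℂ)) * (Uᴴ * U) *
          Matrix.diagonal (fun i => (b i : ℂ))) * Uᴴ := by noncomm_ring
      _ = _ := by
        rw [hU, mul_one, Matrix.diagonal_mul_diagonal]
        congr 3
        ext i
        simp only [b]
        split_ifs <;> simp
  · have hev : ∀ᶠ t : ℝ in nhdsWithin 0 (Set.Ioi 0), t ≤ 1 ∧ ∀ i, l i = 0 ∨ t ≤ l i := by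
      refine Filter.Eventually.and ?_ (Filter.eventually_all.mpr fun i => ?_)
      · exact nhdsWithin_le_nhds (Iic_mem_nhds one_pos)
      · by_cases hi : l i = 0
        · simp [hi]
        · refine nhdsWithin_le_nhds ?_
          filter_upwards [Iic_mem_nhds (lt_of_le_of_ne (hl0 i) (Ne.symm hi))] with t ht
          exact Or.inr ht
    filter_upwards [hev] with t ht
    constructor
    · have := key (fun i => l i - t * b i) (fun i => by
        rcases ht.2 i with h | h
        · simp [b, h]
        · simp only [b]; split_ifs with h'
          · simp [h']
          · linarith)
      convert this using 1
      have e : Matrix.diagonal (fun i => ((l i - t * b i : ℝ) : ℂ)) =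
          Matrix.diagonal (fun i => (l i : ℂ)) -
          (t : ℂ) • Matrix.diagonal (fun i => (b i : ℂ)) := by
        ext i j
        by_cases h : i = j
        · subst h; simp
        · simp [h]
      rw [e]
      simp only [mul_sub, sub_mul, Matrix.mul_smul, Matrix.smul_mul, ← hE]
    · have := key (fun i => (1 - l i) - t * (1 - b i)) (fun i => by
        simp only [b]; split_ifs with h'
        · simp [h', ht.1]
        · simp [hl1 i])
      convert this using 1
      have e : Matrix.diagonal (fun i => (((1 - l i) - t * (1 - b i) : ℝ) : ℂ)) =
          (Matrix.diagonal (fun i => ((1 : ℝ) : ℂ)) - Matrix.diagonal (fun i => (l i : ℂ))) -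
          (t : ℂ) • (Matrix.diagonal (fun i => ((1 : ℝ) : ℂ)) -
            Matrix.diagonal (fun i => (b i : ℂ))) := by
        ext i j
        by_cases h : i = j
        · subst h; simp
        · simp [h]
      rw [e]
      simp only [mul_sub, sub_mul, Matrix.mul_smul, Matrix.smul_mul, ← hone, ← hE]

/-- The partial isometry of a polar decomposition: the range projection `V * Vᴴ` of `A`
factors through a partial isometry `V` of the shape of `A`, with `V = A * B`. -/
lemma exists_polar {n m : Type*} [Fintype n] [DecidableEq n] [Fintype m] [DecidableEq m]
    (A : Matrix n m ℂ) :
    ∃ (V : Matrix n m ℂ) (B : Matrix m m ℂ), V * Vᴴ * V = V ∧ V * Vᴴ * A = A ∧ V = A * B := by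
  have hG := Matrix.posSemidef_conjTranspose_mul_self A
  obtain ⟨U, hU, hU', hE⟩ := exists_spectral hG.1
  set l := hG.1.eigenvalues
  have hl0 : ∀ i, 0 ≤ l i := hG.eigenvalues_nonneg
  let s : m → ℝ := fun i => (Real.sqrt (l i))⁻¹
  let b : m → ℝ := fun i => if l i = 0 then 0 else 1
  let D (f : m → ℝ) : Matrix m m ℂ := Matrix.diagonal (fun i => (f i : ℂ))
  have hD : ∀ f g h, (∀ i, f i * g i = h i) → D f * D g = D h := by
    intro f g h hh
    simp only [D, Matrix.diagonal_mul_diagonal]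
    congr 1
    ext i
    rw [← hh i]; simp
  have hDs : ∀ f, (D f)ᴴ = D f := by
    intro f
    simp only [D, Matrix.diagonal_conjTranspose]
    congr 1
    ext i
    simp
  have hUG : Uᴴ * Aᴴ * A * U = D l := by
    calc Uᴴ * Aᴴ * A * U = Uᴴ * (Aᴴ * A) * U := by simp only [Matrix.mul_assoc]
      _ = (Uᴴ * U) * D l * (Uᴴ * U) := by rw [hE]; noncomm_ring
      _ = D l := by rw [hU]; simp
  -- `A` vanishes on the kernel of `Aᴴ * A`
  have hker : A * U * (1 - D b) = 0 := by
    rw [← Matrix.conjTranspose_mul_self_eq_zero]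
    have h1 : l * b = l := by
      ext i; simp only [b, Pi.mul_apply]; split_ifs with h <;> simp [h]
    calc (A * U * (1 - D b))ᴴ * (A * U * (1 - D b))
        = (1 - D b) * ((Uᴴ * Aᴴ * A * U) * (1 - D b)) := by
          simp only [Matrix.conjTranspose_mul, Matrix.conjTranspose_sub,
            Matrix.conjTranspose_one, hDs]
          simp only [Matrix.mul_assoc]
      _ = 0 := by
          rw [hUG, mul_sub, hD l b l (fun i => congrFun h1 i)]; simp
  have hAb : A * U * D b = A * U := by
    have : A * U * D b = A * U - A * U * (1 - D b) := by rw [Matrix.mul_sub]; simp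
    rw [this, hker, sub_zero]
  have hV : ∀ i, s i * l i * s i = b i := by
    intro i
    simp only [s, b]
    split_ifs with h
    · simp [h]
    · have h' : Real.sqrt (l i) ≠ 0 := by
        rw [Real.sqrt_ne_zero']; exact lt_of_le_of_ne (hl0 i) (Ne.symm h)
      have h2 := Real.mul_self_sqrt (hl0 i)
      rw [inv_mul_eq_div, ← div_eq_mul_inv, div_div, h2, div_self h]
  have hVV : (A * U * D s)ᴴ * (A * U * D s) = D b := by
    calc (A * U * D s)ᴴ * (A * U * D s) = D s * (Uᴴ * Aᴴ * A * U) * D s := by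
          simp only [Matrix.conjTranspose_mul, hDs, Matrix.mul_assoc]
      _ = D b := by
          rw [hUG, hD s l (fun i => s i * l i) (fun i => rfl), hD _ s b hV]
  refine ⟨A * U * D s, U * D s, ?_, ?_, by rw [Matrix.mul_assoc]⟩
  · rw [Matrix.mul_assoc, hVV, Matrix.mul_assoc, hD s b s, ]
    intro i
    simp only [s, b]; split_ifs with h <;> simp [h]
  · have hA : A = A * U * Uᴴ := by rw [Matrix.mul_assoc, hU', Matrix.mul_one]
    calc A * U * D s * (A * U * D s)ᴴ * A
        = A * U * (D s * D s * (Uᴴ * Aᴴ * A * U)) * Uᴴ := by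
          simp only [Matrix.conjTranspose_mul, hDs, Matrix.mul_assoc, hU', Matrix.mul_one]
      _ = A * U * D b * Uᴴ := by
          rw [hUG, hD s s _ (fun i => rfl), hD _ l b]
          intro i; rw [← hV i]; ring
      _ = A := by rw [hAb, ← hA]

/-! ### Jordan's lemma for two projections -/

/-- Jordan's lemma for two projections `P`, `Q`, in matrix form: for a functional that does
not kill the identity there is a common invariant subspace of dimension at most two, the range
of the partial isometry `V`, whose projection is detected by the functional. -/
lemma exists_jordan {n : Type*} [Fintype n] [DecidableEq n] {P Q : Matrix n n ℂ}
    (hP : IsProjMat P) (hQ : IsProjMat Q) (f : Matrix n n ℂ →ₗ[ℂ] ℂ) (hf : f 1 ≠ 0) :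
    ∃ V : Matrix n (Fin 2) ℂ, V * Vᴴ * V = V ∧ P * (V * Vᴴ) = (V * Vᴴ) * P ∧
      Q * (V * Vᴴ) = (V * Vᴴ) * Q ∧ ∃ X, f (V * Vᴴ * X) ≠ 0 := by
  -- `(P - Q) ^ 2` commutes with both projections
  set C := (P - Q) * (P - Q) with hC
  have hCP : C * P = P * C := by
    have h := hP.2
    calc C * P = (P * P) * P - P * Q * P - Q * (P * P) + (Q * Q) * P := by
          rw [hC]; noncomm_ring
      _ = P * (P * P) - (P * P) * Q - P * Q * P + P * (Q * Q) := by
          simp only [hP.2, hQ.2]; noncomm_ring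
      _ = P * C := by rw [hC]; noncomm_ring
  have hCh : C.IsHermitian := by
    simp [Matrix.IsHermitian, hC, hP.1, hQ.1]
  obtain ⟨U, hU, hU', hE⟩ := exists_spectral hCh
  set l := hCh.eigenvalues
  have hCU : C * U = U * Matrix.diagonal (fun i => (l i : ℂ)) := by
    conv_lhs => rw [hE]
    rw [Matrix.mul_assoc, hU, mul_one]
  -- a common eigenvector of `C` and `P` whose rank-one projector is not killed by `f`
  obtain ⟨v, c, ε, hCv, hPv, hfv⟩ : ∃ (v : n → ℂ) (c ε : ℂ), C.mulVec v = c • v ∧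
      P.mulVec v = ε • v ∧ f (Matrix.vecMulVec v (star v)) ≠ 0 := by
    have hsum : ∀ R : Matrix n n ℂ, IsProjMat R →
        ∑ j, Matrix.vecMulVec (R.mulVec (fun i => U i j)) (star (R.mulVec (fun i => U i j)))
          = R := by
      intro R hR
      have : R = (R * U) * (R * U)ᴴ := by
        rw [Matrix.conjTranspose_mul, ← Matrix.mul_assoc, Matrix.mul_assoc R U, hU', hR.1,
          mul_one, hR.2]
      conv_rhs => rw [this]
      ext i j
      simp only [Matrix.sum_apply, Matrix.vecMulVec_apply, Matrix.mul_apply (M := R * U)]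
      rfl
    have hex : ∀ R : Matrix n n ℂ, IsProjMat R → f R ≠ 0 → ∃ j,
        f (Matrix.vecMulVec (R.mulVec (fun i => U i j))
          (star (R.mulVec (fun i => U i j)))) ≠ 0 := by
      intro R hR hfR
      by_contra! h
      apply hfR
      rw [← hsum R hR, map_sum]
      exact Finset.sum_eq_zero fun j _ => h j
    have hcol : ∀ j, C.mulVec (fun i => U i j) = (l j : ℂ) • (fun i => U i j) := by
      intro j
      ext i
      have := congrFun (congrFun hCU i) j
      rw [Matrix.mul_diagonal] at this
      simp only [Pi.smul_apply, smul_eq_mul, mul_comm (l j : ℂ)]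
      rw [← this]; rfl
    have hcolR : ∀ R : Matrix n n ℂ, C * R = R * C → ∀ j,
        C.mulVec (R.mulVec (fun i => U i j)) = (l j : ℂ) • R.mulVec (fun i => U i j) := by
      intro R hR j
      rw [Matrix.mulVec_mulVec, hR, ← Matrix.mulVec_mulVec, hcol, Matrix.mulVec_smul]
    by_cases hfP : f P = 0
    · obtain ⟨j, hj⟩ := hex (1 - P) hP.one_sub (by rwa [map_sub, hfP, sub_zero])
      refine ⟨_, l j, 0, hcolR (1 - P) ?_ j, ?_, hj⟩
      · rw [mul_sub, sub_mul, hCP]; simp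
      · rw [Matrix.mulVec_mulVec, mul_sub, hP.2]; simp
    · obtain ⟨j, hj⟩ := hex P hP hfP
      refine ⟨_, l j, 1, hcolR P hCP j, ?_, hj⟩
      rw [Matrix.mulVec_mulVec, hP.2, one_smul]
  set w := Q.mulVec v with hw
  have hQw : Q.mulVec w = w := by rw [hw, Matrix.mulVec_mulVec, hQ.2]
  -- expanding `(P - Q) ^ 2 v = c v` shows that `P w` lies in the span of `v` and `w`
  have hPw : P.mulVec w = (ε - c) • v + (1 - ε) • w := by
    have e : C = P + Q - P * Q - Q * P := by
      calc C = P * P + Q * Q - P * Q - Q * P := by rw [hC]; noncomm_ring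
        _ = _ := by rw [hP.2, hQ.2]
    rw [e, Matrix.sub_mulVec, Matrix.sub_mulVec, Matrix.add_mulVec, ← Matrix.mulVec_mulVec,
      ← Matrix.mulVec_mulVec, hPv, Matrix.mulVec_smul, ← hw] at hCv
    ext i
    have := congrFun hCv i
    simp only [Pi.add_apply, Pi.sub_apply, Pi.smul_apply, smul_eq_mul] at this ⊢
    linear_combination -this
  let A : Matrix n (Fin 2) ℂ := Matrix.of fun i j => ![v i, w i] j
  have hPA : P * A = A * !![ε, ε - c; 0, 1 - ε] := by
    ext i j
    have h1 := congrFun hPv i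
    have h2 := congrFun hPw i
    fin_cases j
    · simpa [A, Matrix.mul_apply, Fin.sum_univ_two, Matrix.mulVec, dotProduct, mul_comm]
        using h1
    · simpa [A, Matrix.mul_apply, Fin.sum_univ_two, Matrix.mulVec, dotProduct, mul_comm]
        using h2
  have hQA : Q * A = A * (!![0, 0; 1, 1] : Matrix (Fin 2) (Fin 2) ℂ) := by
    ext i j
    have h1 := congrFun hw i
    have h2 := congrFun hQw i
    fin_cases j
    · simpa [A, Matrix.mul_apply, Fin.sum_univ_two, Matrix.mulVec, dotProduct, mul_comm]
        using h1.symm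
    · simpa [A, Matrix.mul_apply, Fin.sum_univ_two, Matrix.mulVec, dotProduct, mul_comm]
        using h2
  obtain ⟨V, B, hV, hVA, hVB⟩ := exists_polar A
  -- a subspace invariant under a Hermitian matrix is reducing
  have hcomm : ∀ (R : Matrix n n ℂ) (S : Matrix (Fin 2) (Fin 2) ℂ), Rᴴ = R → R * A = A * S →
      R * (V * Vᴴ) = (V * Vᴴ) * R := by
    intro R S hR hRA
    have h1 : V * Vᴴ * (R * V) = R * V := by
      have : R * V = A * (S * B) := by
        rw [hVB, ← Matrix.mul_assoc, hRA, Matrix.mul_assoc]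
      rw [this, ← Matrix.mul_assoc, hVA]
    have h2 : (V * Vᴴ) * R * (V * Vᴴ) = R * (V * Vᴴ) := by
      calc (V * Vᴴ) * R * (V * Vᴴ) = (V * Vᴴ * (R * V)) * Vᴴ := by
            simp only [Matrix.mul_assoc]
        _ = R * (V * Vᴴ) := by rw [h1, Matrix.mul_assoc]
    have h3 := congrArg Matrix.conjTranspose h2
    simp only [Matrix.conjTranspose_mul, Matrix.conjTranspose_conjTranspose, hR] at h3
    exact h2.symm.trans ((Matrix.mul_assoc _ _ _).trans h3)
  refine ⟨V, hV, hcomm P _ hP.1 hPA, hcomm Q _ hQ.1 hQA, Matrix.vecMulVec v (star v), ?_⟩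
  have hv : (V * Vᴴ).mulVec v = v := by
    ext i
    have := congrFun (congrFun hVA i) 0
    simpa [A, Matrix.mul_apply (M := V * Vᴴ), Matrix.mulVec, dotProduct] using this
  rwa [Matrix.mul_vecMulVec, hv]

/-! ### Tensor products of rectangular matrices -/

/-- Rectangular version of `tensorN`. -/
def tensorR {N : ℕ} (d d' : Fin N → ℕ) (W : ∀ i, Matrix (Fin (d i)) (Fin (d' i)) ℂ) :
    Matrix (∀ i, Fin (d i)) (∀ i, Fin (d' i)) ℂ :=
  Matrix.of fun r c => ∏ i, W i (r i) (c i)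

lemma tensorN_eq {N : ℕ} (d : Fin N → ℕ) (M : ∀ i, Matrix (Fin (d i)) (Fin (d i)) ℂ) :
    tensorN d M = tensorR d d M := rfl

lemma tensorR_mul {N : ℕ} (d d' d'' : Fin N → ℕ)
    (V : ∀ i, Matrix (Fin (d i)) (Fin (d' i)) ℂ)
    (W : ∀ i, Matrix (Fin (d' i)) (Fin (d'' i)) ℂ) :
    tensorR d d' V * tensorR d' d'' W = tensorR d d'' (fun i => V i * W i) := by
  ext r c
  simp only [tensorR, Matrix.mul_apply, Matrix.of_apply, ← Finset.prod_mul_distrib]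
  rw [Finset.prod_univ_sum, Fintype.piFinset_univ]

lemma tensorR_conjTranspose {N : ℕ} (d d' : Fin N → ℕ)
    (V : ∀ i, Matrix (Fin (d i)) (Fin (d' i)) ℂ) :
    (tensorR d d' V)ᴴ = tensorR d' d (fun i => (V i)ᴴ) := by
  ext r c
  simp [tensorR, Matrix.conjTranspose_apply]

lemma tensorR_one {N : ℕ} (d : Fin N → ℕ) : tensorR d d (fun _ => 1) = 1 := by
  ext r c
  simp only [tensorR, Matrix.of_apply, Matrix.one_apply, Finset.prod_ite_zero, funext_iff]
  simp

/-- The tensor product is linear in the factor at `k`. -/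
lemma tensorN_combo {N : ℕ} (d : Fin N → ℕ) (k : Fin N) (a b : ℂ)
    (A B C : ∀ i, Matrix (Fin (d i)) (Fin (d i)) ℂ) (h0 : A k = a • B k + b • C k)
    (hB : ∀ i, i ≠ k → A i = B i) (hC : ∀ i, i ≠ k → A i = C i) :
    tensorN d A = a • tensorN d B + b • tensorN d C := by
  ext r c
  simp only [tensorN, Matrix.of_apply, Matrix.add_apply, Matrix.smul_apply, smul_eq_mul]
  rw [← Finset.mul_prod_erase _ _ (Finset.mem_univ k),
    ← Finset.mul_prod_erase (a := k) _ (fun i => B i (r i) (c i)) (Finset.mem_univ k),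
    ← Finset.mul_prod_erase (a := k) _ (fun i => C i (r i) (c i)) (Finset.mem_univ k), h0]
  have e1 : ∏ i ∈ Finset.univ.erase k, A i (r i) (c i) =
      ∏ i ∈ Finset.univ.erase k, B i (r i) (c i) :=
    Finset.prod_congr rfl fun i hi => by rw [hB i (Finset.ne_of_mem_erase hi)]
  have e2 : ∏ i ∈ Finset.univ.erase k, A i (r i) (c i) =
      ∏ i ∈ Finset.univ.erase k, C i (r i) (c i) :=
    Finset.prod_congr rfl fun i hi => by rw [hC i (Finset.ne_of_mem_erase hi)]
  rw [← e1, ← e2]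
  simp only [Matrix.add_apply, Matrix.smul_apply, smul_eq_mul]
  ring

/-! ### Mixtures of models and extremality -/

lemma exists_mem_quantumSet {N : ℕ} {x o d : Fin N → ℕ}
    {ρ : Matrix (∀ i, Fin (d i)) (∀ i, Fin (d i)) ℂ} (hρ : IsDensityMatrix ρ)
    {M : ∀ i, Fin (x i) → Fin (o i) → Matrix (Fin (d i)) (Fin (d i)) ℂ}
    (hM : ∀ i xi, IsPOVM (M i xi)) :
    ∃ Q ∈ QuantumSet x o, ∀ (xs : ∀ i, Fin (x i)) (as : ∀ i, Fin (o i)),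
      (Q xs as : ℂ) = (ρ * tensorN d fun i => M i (xs i) (as i)).trace := by
  have key : ∀ (xs : ∀ i, Fin (x i)) (as : ∀ i, Fin (o i)), (((ρ * tensorN d fun i => M i (xs i) (as i)).trace.re : ℝ) : ℂ) =
      (ρ * tensorN d fun i => M i (xs i) (as i)).trace := by
    intro xs as
    rw [← Complex.conj_eq_iff_re, starRingEnd_apply,
      ← Matrix.trace_conjTranspose, Matrix.conjTranspose_mul, hρ.1.1, tensorN_eq,
      tensorR_conjTranspose, Matrix.trace_mul_comm]
    congr 4
    ext i : 1
    exact ((hM i (xs i)).1 (as i)).1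
  exact ⟨fun xs as => (ρ * tensorN d fun i => M i (xs i) (as i)).trace.re,
    ⟨d, ρ, hρ, M, hM, key⟩, key⟩

/-- If an extremal correlation is a proper mixture of the correlations of two models, then the
first of these models realizes it. -/
lemma eq_of_mixture {N : ℕ} {x o d : Fin N → ℕ}
    {P : (∀ i, Fin (x i)) → (∀ i, Fin (o i)) → ℝ}
    (hP : P ∈ Set.extremePoints ℝ (QuantumSet x o))
    {ρ₁ ρ₂ : Matrix (∀ i, Fin (d i)) (∀ i, Fin (d i)) ℂ}
    (h₁ : IsDensityMatrix ρ₁) (h₂ : IsDensityMatrix ρ₂)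
    {M₁ M₂ : ∀ i, Fin (x i) → Fin (o i) → Matrix (Fin (d i)) (Fin (d i)) ℂ}
    (hM₁ : ∀ i xi, IsPOVM (M₁ i xi)) (hM₂ : ∀ i xi, IsPOVM (M₂ i xi))
    {t : ℝ} (ht0 : 0 < t) (ht1 : t < 1)
    (h : ∀ xs as, (P xs as : ℂ) =
      t * (ρ₁ * tensorN d fun i => M₁ i (xs i) (as i)).trace +
      (1 - t) * (ρ₂ * tensorN d fun i => M₂ i (xs i) (as i)).trace) (xs as) :
    (P xs as : ℂ) = (ρ₁ * tensorN d fun i => M₁ i (xs i) (as i)).trace := by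
  obtain ⟨Q₁, hQ₁, e₁⟩ := exists_mem_quantumSet (x := x) (o := o) h₁ hM₁
  obtain ⟨Q₂, hQ₂, e₂⟩ := exists_mem_quantumSet (x := x) (o := o) h₂ hM₂
  have := (mem_extremePoints.mp hP).2 Q₁ hQ₁ Q₂ hQ₂ ⟨t, 1 - t, ht0, by linarith, by ring, ?_⟩
  · rw [← e₁, this.1]
  · ext xs as
    have := h xs as
    rw [← e₁, ← e₂] at this
    simp only [Pi.add_apply, Pi.smul_apply, smul_eq_mul]
    exact_mod_cast this.symm

/-! ### Projective measurements -/

lemma exists_two {m : ℕ} (h : m = 2) : ∃ a b : Fin m, a ≠ b ∧ ∀ c, c = a ∨ c = b := by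
  subst h
  exact ⟨0, 1, by decide, by decide⟩

lemma isPOVM_two {m : ℕ} {a b : Fin m} (hab : a ≠ b) (hc : ∀ c, c = a ∨ c = b)
    {n : ℕ} {E F : Matrix (Fin n) (Fin n) ℂ} (hE : E.PosSemidef) (hF : F.PosSemidef)
    (hs : E + F = 1) : IsPOVM (fun c => if c = a then E else F) := by
  have hu : (Finset.univ : Finset (Fin m)) = {a, b} := by
    ext c; simpa using hc c
  refine ⟨fun c => ?_, ?_⟩
  · dsimp only
    split_ifs <;> assumption
  · rw [hu, Finset.sum_pair hab]
    simp [hab.symm, hs]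

lemma IsPOVM.eq_one_sub {m : ℕ} {a b : Fin m} (hab : a ≠ b) (hc : ∀ c, c = a ∨ c = b)
    {n : ℕ} {M : Fin m → Matrix (Fin n) (Fin n) ℂ} (hM : IsPOVM M) : M b = 1 - M a := by
  have hu : (Finset.univ : Finset (Fin m)) = {a, b} := by
    ext c; simpa using hc c
  rw [← hM.2, hu, Finset.sum_pair hab]
  simp

/-- In a model of an extremal correlation, the two-outcome measurements of one party can be
replaced by projective ones: each effect is a mixture of its support projection and another
effect, with a weight that can be chosen uniformly in the setting. -/
lemma exists_projective {N : ℕ} {x o d : Fin N → ℕ} (k : Fin N) (ho : o k = 2)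
    {P : (∀ i, Fin (x i)) → (∀ i, Fin (o i)) → ℝ}
    (hP : P ∈ Set.extremePoints ℝ (QuantumSet x o))
    {ρ : Matrix (∀ i, Fin (d i)) (∀ i, Fin (d i)) ℂ} (hρ : IsDensityMatrix ρ)
    {M : ∀ i, Fin (x i) → Fin (o i) → Matrix (Fin (d i)) (Fin (d i)) ℂ}
    (hM : ∀ i xi, IsPOVM (M i xi))
    (h : ∀ xs as, (P xs as : ℂ) = (ρ * tensorN d fun i => M i (xs i) (as i)).trace) :
    ∃ M' : ∀ i, Fin (x i) → Fin (o i) → Matrix (Fin (d i)) (Fin (d i)) ℂ,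
      (∀ i xi, IsPOVM (M' i xi)) ∧ (∀ s a, IsProjMat (M' k s a)) ∧
      ∀ xs as, (P xs as : ℂ) = (ρ * tensorN d fun i => M' i (xs i) (as i)).trace := by
  obtain ⟨a, b, hab, hc⟩ := exists_two ho
  have hb : ∀ s, M k s b = 1 - M k s a := fun s => (hM k s).eq_one_sub hab hc
  have hex := fun s => exists_support ((hM k s).1 a) (hb s ▸ (hM k s).1 b)
  choose B hB hev using hex
  have hlt : ∀ᶠ t : ℝ in nhdsWithin 0 (Set.Ioi 0), 0 < t ∧ t < 1 :=
    Filter.Eventually.and self_mem_nhdsWithin (nhdsWithin_le_nhds (Iio_mem_nhds one_pos))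
  obtain ⟨t, ⟨ht0, ht1⟩, ht⟩ := (hlt.and (Filter.eventually_all.mpr hev)).exists
  have ht2 : (1 - t : ℂ) ≠ 0 := by
    have : (1 - t : ℝ) ≠ 0 := by linarith
    exact_mod_cast this
  have hti : (0 : ℂ) ≤ (1 - t : ℂ)⁻¹ := by
    have : (0 : ℝ) ≤ (1 - t)⁻¹ := by
      rw [inv_nonneg]; linarith
    exact_mod_cast this
  let F₁ : Fin (x k) → Fin (o k) → Matrix (Fin (d k)) (Fin (d k)) ℂ :=
    fun s c => if c = a then B s else 1 - B s
  let F₂ : Fin (x k) → Fin (o k) → Matrix (Fin (d k)) (Fin (d k)) ℂ :=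
    fun s c => if c = a then (1 - t : ℂ)⁻¹ • (M k s a - (t : ℂ) • B s)
      else (1 - t : ℂ)⁻¹ • ((1 - M k s a) - (t : ℂ) • (1 - B s))
  have hF₁ : ∀ s, IsPOVM (F₁ s) := fun s =>
    isPOVM_two hab hc (hB s).posSemidef (hB s).one_sub.posSemidef (by abel)
  have hF₂ : ∀ s, IsPOVM (F₂ s) := fun s => by
    refine isPOVM_two hab hc ((ht s).1.smul hti) ((ht s).2.smul hti) ?_
    rw [← smul_add]
    have : M k s a - (t : ℂ) • B s + (1 - M k s a - (t : ℂ) • (1 - B s)) =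
        (1 - t : ℂ) • (1 : Matrix (Fin (d k)) (Fin (d k)) ℂ) := by
      module
    rw [this, smul_smul, inv_mul_cancel₀ ht2, one_smul]
  have hup : ∀ F : Fin (x k) → Fin (o k) → Matrix (Fin (d k)) (Fin (d k)) ℂ,
      (∀ s, IsPOVM (F s)) → ∀ i xi, IsPOVM (Function.update M k F i xi) := by
    intro F hF i xi
    by_cases hi : i = k
    · subst hi; simpa using hF xi
    · rw [Function.update_of_ne hi]; exact hM i xi
  refine ⟨Function.update M k F₁, hup F₁ hF₁, ?_, ?_⟩
  · intro s c
    rw [Function.update_self]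
    simp only [F₁]
    split_ifs
    · exact hB s
    · exact (hB s).one_sub
  · refine eq_of_mixture hP hρ hρ (hup F₁ hF₁) (hup F₂ hF₂) ht0 ht1 ?_
    intro xs as
    rw [h xs as, tensorN_combo d k t (1 - t) (fun i => M i (xs i) (as i))
      (fun i => Function.update M k F₁ i (xs i) (as i))
      (fun i => Function.update M k F₂ i (xs i) (as i))]
    · simp [mul_add]
    · simp only [Function.update_self, F₁, F₂]
      rcases hc (as k) with hk | hk
      · simp only [hk, if_true, smul_smul, mul_inv_cancel₀ ht2, one_smul]
        abel
      · simp only [hk, hab.symm, if_false, smul_smul, mul_inv_cancel₀ ht2, one_smul, hb]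
        abel
    · intro i hi
      simp only [Function.update_of_ne hi]
    · intro i hi
      simp only [Function.update_of_ne hi]

/-! ### Compression to a local block -/

/-- An extremal correlation is also realized by compressing the state to the range of a local
projection `V * Vᴴ` that commutes with the measurements of party `k` and is detected by the
state. The compressed party then lives in the (initial) space of `V`. -/
lemma realizes_compress {N m : ℕ} {x o d : Fin N → ℕ} (k : Fin N) (c : Fin (o k))
    {P : (∀ i, Fin (x i)) → (∀ i, Fin (o i)) → ℝ}
    (hP : P ∈ Set.extremePoints ℝ (QuantumSet x o))
    {ρ : Matrix (∀ i, Fin (d i)) (∀ i, Fin (d i)) ℂ} (hρ : IsDensityMatrix ρ)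
    {M : ∀ i, Fin (x i) → Fin (o i) → Matrix (Fin (d i)) (Fin (d i)) ℂ}
    (hM : ∀ i xi, IsPOVM (M i xi))
    (h : ∀ xs as, (P xs as : ℂ) = (ρ * tensorN d fun i => M i (xs i) (as i)).trace)
    (V : Matrix (Fin (d k)) (Fin m) ℂ) (hV : V * Vᴴ * V = V)
    (hcomm : ∀ s a, M k s a * (V * Vᴴ) = V * Vᴴ * M k s a)
    (X : Matrix (Fin (d k)) (Fin (d k)) ℂ)
    (hX : (ρ * tensorN d (Function.update (fun _ => 1) k (V * Vᴴ * X))).trace ≠ 0) :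
    ∃ d' : Fin N → ℕ, d' k = m ∧ Realizes x o d' P := by
  set Pi : ∀ i, Matrix (Fin (d i)) (Fin (d i)) ℂ := Function.update (fun _ => 1) k (V * Vᴴ)
    with hPi
  have hPi2 : ∀ i, Pi i * Pi i = Pi i := by
    intro i
    by_cases hi : i = k
    · subst hi
      rw [hPi, Function.update_self, ← Matrix.mul_assoc, hV]
    · rw [hPi, Function.update_of_ne hi, mul_one]
  have hPih : ∀ i, (Pi i)ᴴ = Pi i := by
    intro i
    by_cases hi : i = k
    · subst hi
      rw [hPi, Function.update_self, Matrix.conjTranspose_mul, Matrix.conjTranspose_conjTranspose]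
    · rw [hPi, Function.update_of_ne hi, Matrix.conjTranspose_one]
  have hPiM : ∀ i s a, M i s a * Pi i = Pi i * M i s a := by
    intro i s a
    by_cases hi : i = k
    · subst hi
      rw [hPi, Function.update_self, hcomm]
    · rw [hPi, Function.update_of_ne hi, mul_one, one_mul]
  set T := tensorN d Pi with hT
  have hTT : T * T = T := by
    rw [hT, tensorN_eq, tensorR_mul]; simp only [hPi2]
  have hTh : Tᴴ = T := by
    rw [hT, tensorN_eq, tensorR_conjTranspose]; simp only [hPih]
  set G : (∀ i, Fin (x i)) → (∀ i, Fin (o i)) → Matrix (∀ i, Fin (d i)) (∀ i, Fin (d i)) ℂ :=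
    fun xs as => tensorN d fun i => M i (xs i) (as i) with hG
  have hTG : ∀ xs as, G xs as * T = T * G xs as := by
    intro xs as
    simp only [hG, hT, tensorN_eq, tensorR_mul, hPiM]
  have hpsd : (T * ρ * T).PosSemidef := by
    have := hρ.1.conjTranspose_mul_mul_same T
    rwa [hTh] at this
  have hpsd' : ((1 - T) * ρ * (1 - T)).PosSemidef := by
    have := hρ.1.conjTranspose_mul_mul_same (1 - T)
    rwa [Matrix.conjTranspose_sub, Matrix.conjTranspose_one, hTh] at this
  have hsplit : ∀ A, A * T = T * A → (ρ * A).trace =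
      (T * ρ * T * A).trace + ((1 - T) * ρ * (1 - T) * A).trace := by
    intro A hA
    have e1 : (T * ρ * T * A).trace = (ρ * (T * A)).trace := by
      rw [Matrix.mul_assoc, Matrix.mul_assoc, Matrix.trace_mul_comm, Matrix.mul_assoc,
        Matrix.mul_assoc, hA, ← Matrix.mul_assoc T T, hTT]
    have e2 : ((1 - T) * ρ * (1 - T) * A).trace = (ρ * ((1 - T) * A)).trace := by
      rw [Matrix.mul_assoc, Matrix.mul_assoc, Matrix.trace_mul_comm, Matrix.mul_assoc,
        Matrix.mul_assoc]
      congr 2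
      simp only [sub_mul, mul_sub, one_mul, mul_one, hA, ← Matrix.mul_assoc, hTT]
      simp
    rw [e1, e2, ← Matrix.trace_add, ← mul_add, ← add_mul]
    simp
  -- the weight of the compressed state is positive
  have hne : (T * ρ * T).trace ≠ 0 := by
    intro h0
    have h1 := hpsd.trace_eq_zero_iff.mp h0
    apply hX
    obtain ⟨B, hB⟩ := exists_gram hρ.1
    have h2 : B * T = 0 := by
      rw [← Matrix.conjTranspose_mul_self_eq_zero, ← h1, Matrix.conjTranspose_mul, hTh, hB]
      simp only [Matrix.mul_assoc]
    have h3 : tensorN d (Function.update (fun _ => 1) k (V * Vᴴ * X)) =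
        T * tensorN d (Function.update (fun _ => 1) k X) := by
      rw [hT, tensorN_eq, tensorN_eq, tensorN_eq, tensorR_mul]
      congr 1
      ext i : 1
      by_cases hi : i = k
      · subst hi; simp [hPi]
      · simp [hPi, Function.update_of_ne hi]
    rw [h3, ← Matrix.mul_assoc, hB, Matrix.mul_assoc Bᴴ, h2]
    simp
  obtain ⟨p, hp0, hp⟩ : ∃ p : ℝ, 0 < p ∧ (T * ρ * T).trace = p := by
    have h0 := hpsd.trace_nonneg
    rw [Complex.le_def] at h0
    have e : (T * ρ * T).trace = (((T * ρ * T).trace.re : ℝ) : ℂ) :=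
      Complex.ext rfl (by simpa using h0.2.symm)
    refine ⟨_, lt_of_le_of_ne h0.1 fun h' => hne ?_, e⟩
    rw [e, ← h']; simp
  have hp' : ((1 - T) * ρ * (1 - T)).trace = 1 - p := by
    have := hsplit 1 (by simp)
    rw [mul_one, mul_one, mul_one, hρ.2, hp] at this
    rw [this]; ring
  have hp1 : p ≤ 1 := by
    have h0 := hpsd'.trace_nonneg
    rw [hp'] at h0
    have : (0 : ℝ) ≤ 1 - p := by exact_mod_cast h0
    linarith
  have hpc : (p : ℂ) ≠ 0 := by exact_mod_cast hp0.ne'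
  have hd₁ : IsDensityMatrix ((p : ℂ)⁻¹ • (T * ρ * T)) := by
    refine ⟨hpsd.smul ?_, ?_⟩
    · have : (0 : ℝ) ≤ p⁻¹ := by positivity
      exact_mod_cast this
    · rw [Matrix.trace_smul, hp, smul_eq_mul, inv_mul_cancel₀ hpc]
  have hq : (1 - (p / 2 : ℝ) : ℂ) ≠ 0 := by
    have : (1 - p / 2 : ℝ) ≠ 0 := by linarith
    exact_mod_cast this
  -- Half of the compressed part goes to the second state, so that the two weights
  -- `p / 2` and `1 - p / 2` are positive even when `p = 1`.
  have hd₂ : IsDensityMatrix ((1 - (p / 2 : ℝ) : ℂ)⁻¹ •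
      ((2 : ℂ)⁻¹ • (T * ρ * T) + (1 - T) * ρ * (1 - T))) := by
    refine ⟨((hpsd.smul ?_).add hpsd').smul ?_, ?_⟩
    · have : (0 : ℝ) ≤ 2⁻¹ := by positivity
      have e : ((2⁻¹ : ℝ) : ℂ) = 2⁻¹ := by push_cast; rfl
      rw [← e]
      exact_mod_cast this
    · have : (0 : ℝ) ≤ (1 - p / 2)⁻¹ := by
        rw [inv_nonneg]; linarith
      exact_mod_cast this
    · rw [Matrix.trace_smul, Matrix.trace_add, Matrix.trace_smul, hp, hp', smul_eq_mul,
        smul_eq_mul]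
      rw [inv_mul_eq_one₀ hq]
      push_cast
      ring
  have hreal : ∀ xs as, (P xs as : ℂ) = ((p : ℂ)⁻¹ • (T * ρ * T) * G xs as).trace := by
    refine eq_of_mixture hP hd₁ hd₂ hM hM (t := p / 2) (by linarith) (by linarith) ?_
    intro xs as
    rw [h xs as, hsplit _ (hTG xs as)]
    simp only [Matrix.smul_mul, Matrix.trace_smul, Matrix.add_mul, Matrix.trace_add, smul_eq_mul]
    rw [← mul_assoc, ← mul_assoc, mul_inv_cancel₀ hq]
    push_cast
    field_simp
    ring
  -- local data of the compressed model
  have hloc : ∀ i, ∃ n : ℕ, (i = k → n = m) ∧ ∃ W : Matrix (Fin (d i)) (Fin n) ℂ,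
      W * Wᴴ = Pi i ∧ ∃ M' : Fin (x i) → Fin (o i) → Matrix (Fin n) (Fin n) ℂ,
        (∀ s, IsPOVM (M' s)) ∧ ∀ s a, W * M' s a * Wᴴ = Pi i * M i s a * Pi i := by
    intro i
    by_cases hi : i = k
    · subst hi
      have hR : IsProjMat (Vᴴ * V) := by
        refine ⟨by simp, ?_⟩
        rw [Matrix.mul_assoc, ← Matrix.mul_assoc V, hV]
      refine ⟨m, fun _ => rfl, V, by simp [hPi], fun s a => Vᴴ * M i s a * V +
        if a = c then 1 - Vᴴ * V else 0, fun s => ⟨fun a => ?_, ?_⟩, fun s a => ?_⟩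
      · refine (((hM i s).1 a).conjTranspose_mul_mul_same V).add ?_
        split_ifs
        · exact hR.one_sub.posSemidef
        · exact Matrix.PosSemidef.zero
      · rw [Finset.sum_add_distrib, ← Matrix.sum_mul, ← Matrix.mul_sum, (hM i s).2]
        simp
      · have h0 : V * (if a = c then 1 - Vᴴ * V else 0) = 0 := by
          split_ifs
          · rw [Matrix.mul_sub, ← Matrix.mul_assoc, hV]; simp
          · simp
        rw [Matrix.mul_add, h0, add_zero, hPi, Function.update_self]
        simp only [Matrix.mul_assoc]
    · refine ⟨d i, fun h' => absurd h' hi, 1, ?_, M i, hM i, fun s a => ?_⟩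
      · simp [hPi, Function.update_of_ne hi]
      · simp [hPi, Function.update_of_ne hi]
  choose d' hd' W hW M' hM' hWM using hloc
  refine ⟨d', hd' k rfl, ?_⟩
  set S := tensorR d d' W with hS
  have hSS : S * Sᴴ = T := by
    rw [hS, tensorR_conjTranspose, tensorR_mul, hT, tensorN_eq]; simp only [hW]
  have htr : ∀ A, (Sᴴ * ρ * S * A).trace = (ρ * (S * A * Sᴴ)).trace := by
    intro A
    rw [Matrix.mul_assoc, Matrix.mul_assoc, Matrix.trace_mul_comm]
    simp only [Matrix.mul_assoc]
  refine ⟨(p : ℂ)⁻¹ • (Sᴴ * ρ * S), ⟨(hρ.1.conjTranspose_mul_mul_same S).smul ?_, ?_⟩,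
    M', hM', fun xs as => ?_⟩
  · have : (0 : ℝ) ≤ p⁻¹ := by positivity
    exact_mod_cast this
  · have h1 : (Sᴴ * ρ * S).trace = p := by
      have := htr 1
      rw [Matrix.mul_one, Matrix.mul_one, hSS] at this
      rw [this, ← hp, Matrix.trace_mul_comm (T * ρ), ← Matrix.mul_assoc, hTT,
        Matrix.trace_mul_comm]
    rw [Matrix.trace_smul, h1, smul_eq_mul, inv_mul_cancel₀ hpc]
  · rw [hreal xs as, Matrix.smul_mul, Matrix.smul_mul, Matrix.trace_smul, Matrix.trace_smul, htr]
    have e : S * (tensorN d' fun i => M' i (xs i) (as i)) * Sᴴ = T * G xs as * T := by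
      rw [hS, tensorR_conjTranspose]
      simp only [hG, hT, tensorN_eq, tensorR_mul, hWM]
    rw [e, Matrix.mul_assoc T, Matrix.mul_assoc T, Matrix.trace_mul_comm T]
    simp only [Matrix.mul_assoc]

theorem extremal_realizable_with_qubit_for_Alice
    (N : ℕ) [NeZero N] (x o : Fin N → ℕ) (hx : x 0 = 2) (ho : o 0 = 2)
    (P : (∀ i, Fin (x i)) → (∀ i, Fin (o i)) → ℝ)
    (hP : P ∈ Set.extremePoints ℝ (QuantumSet x o)) :
    ∃ d : Fin N → ℕ, d 0 = 2 ∧ Realizes x o d P := by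
  obtain ⟨d, ρ, hρ, M₀, hM₀, h₀⟩ := (mem_extremePoints.mp hP).1
  obtain ⟨M, hM, hproj, h⟩ := exists_projective 0 ho hP hρ hM₀ h₀
  obtain ⟨a, b, hab, hc⟩ := exists_two ho
  obtain ⟨s, s', -, hs⟩ := exists_two hx
  -- the restriction of the state to the algebra of party `0`
  let f : Matrix (Fin (d 0)) (Fin (d 0)) ℂ →ₗ[ℂ] ℂ :=
    { toFun := fun X => (ρ * tensorN d (Function.update (fun _ => 1) 0 X)).trace
      map_add' := fun X Y => by
        rw [tensorN_combo d 0 1 1 (Function.update (fun _ => 1) 0 (X + Y))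
          (Function.update (fun _ => 1) 0 X) (Function.update (fun _ => 1) 0 Y) (by simp)
          (fun i hi => by simp [Function.update_of_ne hi])
          (fun i hi => by simp [Function.update_of_ne hi])]
        simp [mul_add]
      map_smul' := fun r X => by
        rw [tensorN_combo d 0 r 0 (Function.update (fun _ => 1) 0 (r • X))
          (Function.update (fun _ => 1) 0 X) (Function.update (fun _ => 1) 0 X) (by simp)
          (fun i hi => by simp [Function.update_of_ne hi])
          (fun i hi => by simp [Function.update_of_ne hi])]
        simp }
  have hf : f 1 ≠ 0 := by
    have : (Function.update (fun _ => 1) 0 1 : ∀ i, Matrix (Fin (d i)) (Fin (d i)) ℂ) =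
        fun _ => 1 := Function.update_eq_self 0 (fun i => (1 : Matrix (Fin (d i)) (Fin (d i)) ℂ))
    change (ρ * tensorN d (Function.update (fun _ => 1) 0 1)).trace ≠ 0
    rw [this, tensorN_eq, tensorR_one, mul_one, hρ.2]
    exact one_ne_zero
  obtain ⟨V, hV, h1, h2, X, hX⟩ := exists_jordan (hproj s a) (hproj s' a) f hf
  refine realizes_compress 0 a hP hρ hM h V hV ?_ X hX
  have ha : ∀ u, M 0 u a * (V * Vᴴ) = V * Vᴴ * M 0 u a := by
    intro u
    rcases hs u with rfl | rfl
    · exact h1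
    · exact h2
  intro u c
  rcases hc c with rfl | rfl
  · exact ha u
  · rw [(hM 0 u).eq_one_sub hab hc, Matrix.sub_mul, Matrix.mul_sub, ha u]
    simp
end
end

section
/- Consider an N-partite Bell scenario in which one distinguished party (Alice) has exactly two measurement settings, each with two outcomes. If a convexly extremal quantum correlation in this scenario is realizable with the other N−1 parties using local Hilbert spaces of finite dimensions d₂,...,d_N, then it is realizable with Alice's local Hilbert space of dimension 2 while the remaining parties retain local Hilbert spaces of dimensions d₂,...,d_N. -/
/-!
Only Alice's side of the model is modified; the measurement operators of the other parties are
kept throughout, so their dimensions do not change. For a fixed state the behaviour is affine in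
Alice's two effects `E 0`, `E 1` (the operators of outcome `0`), and extremality is used twice.

* An effect is a nontrivial convex combination of its support projection and another effect
  (`exists_projection_part`). Taking the same weight for both settings exhibits `P` as a mixture of
  two behaviours, the first of which comes from projective measurements of Alice. By extremality
  it is `P` itself (`exists_projective_model`), so no dilation of her space is needed.
* Two projections `A`, `B` commute with the projection onto the span of `w` and `B w` whenever `w`
  is a common eigenvector of `A` and `(A + B - 1)²`. These vectors span the space, hence some such
  block carries nonzero weight of the state (`exists_invariant_partial_isometry`,
  `exists_support_block`). Since Alice's operators are block diagonal, `P` is a mixture of the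
  behaviour of this block, realized with a qubit for Alice, and that of the complement. By
  extremality the former is `P` (`exists_qubit_model`).

Extremality is only ever applied to a single two-point mixture, so convexity of the quantum set is
not required.
-/


/- STATEMENT 2: in an N-partite Bell scenario in which the distinguished party `0` (Alice)
has exactly two settings with two outcomes each, if a convexly extremal quantum correlation
is realizable with some local dimensions `d` (so the other parties use finite local
dimensions `d i`, `i ≠ 0`), then it is realizable with Alice's local dimension 2 while the
remaining parties keep their local dimensions `d i`. -/

open scoped BigOperators Kronecker Matrix ComplexOrder

noncomputable section

open Matrix

/-! ### Spectral calculus for effects -/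

theorem exists_diagonalization {n : Type*} [Fintype n] [DecidableEq n] {A : Matrix n n ℂ}
    (hA : A.IsHermitian) :
    ∃ (U : Matrix n n ℂ) (l : n → ℝ), U * Uᴴ = 1 ∧ Uᴴ * U = 1 ∧
      A = U * diagonal (fun i => (l i : ℂ)) * Uᴴ := by
  refine ⟨hA.eigenvectorUnitary, hA.eigenvalues, ?_, ?_, ?_⟩
  · exact Unitary.coe_mul_star_self _
  · exact Unitary.coe_star_mul_self _
  · conv_lhs => rw [hA.spectral_theorem, Unitary.conjStarAlgAut_apply]
    rfl

theorem posSemidef_unitary_conj_diagonal {n : Type*} [Fintype n] [DecidableEq n]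
    {U : Matrix n n ℂ} (hU : Uᴴ * U = 1) (l : n → ℝ) :
    (U * diagonal (fun i => (l i : ℂ)) * Uᴴ).PosSemidef ↔ ∀ i, 0 ≤ l i := by
  constructor
  · intro h
    have h2 := h.conjTranspose_mul_mul_same U
    have h3 : Uᴴ * (U * diagonal (fun i => (l i : ℂ)) * Uᴴ) * U
        = diagonal (fun i => (l i : ℂ)) := by
      calc _ = (Uᴴ * U) * diagonal (fun i => (l i : ℂ)) * (Uᴴ * U) := by
            simp only [Matrix.mul_assoc]
        _ = _ := by simp [hU]
    rw [h3, posSemidef_diagonal_iff] at h2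
    intro i
    exact_mod_cast h2 i
  · intro h
    have : (diagonal (fun i => (l i : ℂ))).PosSemidef := by
      rw [posSemidef_diagonal_iff]
      intro i
      exact_mod_cast h i
    exact this.mul_mul_conjTranspose_same U

theorem one_sub_unitary_conj_diagonal {n : Type*} [Fintype n] [DecidableEq n]
    {U : Matrix n n ℂ} (hU : U * Uᴴ = 1) (l : n → ℝ) :
    1 - U * diagonal (fun i => (l i : ℂ)) * Uᴴ
      = U * diagonal (fun i => ((1 - l i : ℝ) : ℂ)) * Uᴴ := by
  have : diagonal (fun i => ((1 - l i : ℝ) : ℂ)) = 1 - diagonal (fun i => (l i : ℂ)) := by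
    rw [← diagonal_one, diagonal_sub]; simp
  rw [this, Matrix.mul_sub, Matrix.sub_mul, Matrix.mul_one, hU]

/-- An effect `0 ≤ A ≤ 1`. A two-outcome POVM is the pair `A, 1 - A` for an effect `A`. -/
def IsEffect {n : Type*} [Fintype n] [DecidableEq n] (A : Matrix n n ℂ) : Prop :=
  A.PosSemidef ∧ (1 - A).PosSemidef

theorem isEffect_unitary_conj_diagonal {n : Type*} [Fintype n] [DecidableEq n]
    {U : Matrix n n ℂ} (hU : U * Uᴴ = 1) (hU' : Uᴴ * U = 1) (l : n → ℝ) :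
    IsEffect (U * diagonal (fun i => (l i : ℂ)) * Uᴴ) ↔ ∀ i, 0 ≤ l i ∧ l i ≤ 1 := by
  rw [IsEffect, one_sub_unitary_conj_diagonal hU, posSemidef_unitary_conj_diagonal hU',
    posSemidef_unitary_conj_diagonal hU', forall_and]
  simp

/-- An effect is a convex combination of its support projection `Q` and another effect, with
weight `t` on `Q` for every sufficiently small `t > 0`: `t` only has to lie below the nonzero
eigenvalues of `A`. The common range of `t` allows several effects to be decomposed with the
same weight. -/
theorem exists_projection_part {n : Type*} [Fintype n] [DecidableEq n] {A : Matrix n n ℂ}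
    (hA : IsEffect A) :
    ∃ Q : Matrix n n ℂ, Q.IsHermitian ∧ Q * Q = Q ∧ IsEffect Q ∧
      ∀ᶠ t : ℝ in nhdsWithin 0 (Set.Ioi 0), ∃ C : Matrix n n ℂ, IsEffect C ∧
        A = (t : ℂ) • Q + (1 - t : ℂ) • C := by
  obtain ⟨U, l, hU, hU', rfl⟩ := exists_diagonalization hA.1.1
  have hl := (isEffect_unitary_conj_diagonal hU hU' l).1 hA
  let q : n → ℝ := fun i => if l i = 0 then 0 else 1
  have hq : IsEffect (U * diagonal (fun i => (q i : ℂ)) * Uᴴ) := by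
    rw [isEffect_unitary_conj_diagonal hU hU']
    intro i
    by_cases h : l i = 0 <;> simp [q, h]
  refine ⟨U * diagonal (fun i => (q i : ℂ)) * Uᴴ, hq.1.1, ?_, hq, ?_⟩
  · calc _ = U * diagonal (fun i => (q i : ℂ)) * (Uᴴ * U) * diagonal (fun i => (q i : ℂ)) * Uᴴ := by
          simp only [Matrix.mul_assoc]
      _ = U * (diagonal (fun i => (q i : ℂ)) * diagonal (fun i => (q i : ℂ))) * Uᴴ := by
          rw [hU', Matrix.mul_one]; simp only [Matrix.mul_assoc]
      _ = _ := by
          rw [diagonal_mul_diagonal]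
          congr 3; ext i
          by_cases h : l i = 0 <;> simp [q, h]
  · have h1 : ∀ᶠ t : ℝ in nhdsWithin 0 (Set.Ioi 0), ∀ i, l i ≠ 0 → t ≤ l i := by
      rw [Filter.eventually_all]
      intro i
      by_cases h : l i = 0
      · simp [h]
      · have : 0 < l i := lt_of_le_of_ne (hl i).1 (Ne.symm h)
        filter_upwards [nhdsWithin_le_nhds (Iio_mem_nhds this)] with t ht _
        exact le_of_lt ht
    filter_upwards [h1, nhdsWithin_le_nhds (Iio_mem_nhds (zero_lt_one (α := ℝ))),
      self_mem_nhdsWithin] with t ht ht1 ht0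
    have ht1' : 0 < 1 - t := sub_pos.2 ht1
    have ht0' : 0 < t := ht0
    let c : n → ℝ := fun i => (l i - t * q i) / (1 - t)
    refine ⟨U * diagonal (fun i => (c i : ℂ)) * Uᴴ, ?_, ?_⟩
    · rw [isEffect_unitary_conj_diagonal hU hU']
      intro i
      by_cases h : l i = 0
      · simp [c, q, h]
      · have := ht i h
        simp only [c, q, h, if_false]
        rw [div_le_one ht1']
        refine ⟨div_nonneg (by linarith) ht1'.le, by linarith [(hl i).2]⟩
    · have : diagonal (fun i => (l i : ℂ)) = (t : ℂ) • diagonal (fun i => (q i : ℂ))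
          + (1 - t : ℂ) • diagonal (fun i => (c i : ℂ)) := by
        rw [← diagonal_smul, ← diagonal_smul, diagonal_add]
        congr 1; ext i
        have h2 : (1 - t : ℂ) ≠ 0 := by exact_mod_cast ht1'.ne'
        simp only [c, Pi.smul_apply, smul_eq_mul]
        push_cast
        field_simp
        ring
      rw [this]
      simp [Matrix.mul_add, Matrix.add_mul]

/-! ### Invariant subspaces of two projections -/

/-- The columns of `F` and those of some partial isometry `W` span the same space. Here
`W = F U D` with `Fᴴ F = U diag(l) Uᴴ` and `D` the diagonal of the `1/√lᵢ`, set to `0` where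
`lᵢ = 0`. -/
theorem exists_partial_isometry {m n : Type*} [Fintype n] [Fintype m] [DecidableEq m]
    (F : Matrix n m ℂ) :
    ∃ (W : Matrix n m ℂ) (X Y : Matrix m m ℂ), W * Wᴴ * W = W ∧ F = W * X ∧ W = F * Y := by
  obtain ⟨U, l, hU, hU', hF⟩ := exists_diagonalization (isHermitian_conjTranspose_mul_self F)
  have hl : ∀ i, 0 ≤ l i := by
    rw [← posSemidef_unitary_conj_diagonal hU', ← hF]
    exact posSemidef_conjTranspose_mul_self F
  let r : m → ℝ := fun i => if l i = 0 then 0 else (Real.sqrt (l i))⁻¹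
  let s : m → ℝ := fun i => Real.sqrt (l i)
  let R : Matrix m m ℂ := diagonal fun i => (r i : ℂ)
  let S : Matrix m m ℂ := diagonal fun i => (s i : ℂ)
  let L : Matrix m m ℂ := diagonal fun i => (l i : ℂ)
  have hR : Rᴴ = R := by simp only [R, diagonal_conjTranspose]; congr 1; ext i; simp
  have hG : (F * U)ᴴ * (F * U) = L := by
    calc _ = Uᴴ * (Fᴴ * F) * U := by simp only [conjTranspose_mul, Matrix.mul_assoc]
      _ = (Uᴴ * U) * L * (Uᴴ * U) := by rw [hF]; simp only [Matrix.mul_assoc, L]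
      _ = L := by simp [hU']
  have e1 : R * L * R * R = R := by
    simp only [R, L, diagonal_mul_diagonal]
    congr 1; ext i
    by_cases h : l i = 0
    · simp [r, h]
    · have h3 : Real.sqrt (l i) ≠ 0 := (Real.sqrt_pos.2 (lt_of_le_of_ne (hl i) (Ne.symm h))).ne'
      have h4 := Real.mul_self_sqrt (hl i)
      norm_cast
      simp only [r, h, if_false]
      nth_rw 2 [← h4]
      field_simp
  have e2 : (F * U) * (R * S) = F * U := by
    -- the columns of `F * U` are orthogonal, and those with eigenvalue `0` vanish
    have h0 : (F * U) * (1 - R * S) = 0 := by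
      rw [← conjTranspose_mul_self_eq_zero]
      have : L * (1 - R * S) = 0 := by
        simp only [L, R, S, ← diagonal_one, diagonal_mul_diagonal, diagonal_sub]
        rw [diagonal_eq_zero]
        ext i
        by_cases h : l i = 0
        · simp [h]
        · have h3 : Real.sqrt (l i) ≠ 0 :=
            (Real.sqrt_pos.2 (lt_of_le_of_ne (hl i) (Ne.symm h))).ne'
          simp only [Pi.zero_apply]
          norm_cast
          simp [r, s, h, h3]
      calc _ = (1 - R * S)ᴴ * (((F * U)ᴴ * (F * U)) * (1 - R * S)) := by
            simp only [conjTranspose_mul, Matrix.mul_assoc]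
        _ = 0 := by rw [hG, this, Matrix.mul_zero]
    rw [Matrix.mul_sub, Matrix.mul_one, sub_eq_zero] at h0
    exact h0.symm
  refine ⟨F * U * R, S * Uᴴ, U * R, ?_, ?_, by simp only [Matrix.mul_assoc]⟩
  · calc _ = F * U * R * (Rᴴ * ((F * U)ᴴ * (F * U)) * R) := by
          simp only [conjTranspose_mul, Matrix.mul_assoc]
      _ = F * U * (R * L * R * R) := by
          rw [hG, hR]
          simp only [R, L, Matrix.mul_assoc, diagonal_mul_diagonal]
          congr 3; ext i; ring
      _ = _ := by rw [e1]
  · calc F = F * (U * Uᴴ) := by rw [hU, Matrix.mul_one]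
      _ = F * U * (R * S) * Uᴴ := by rw [e2, Matrix.mul_assoc]
      _ = _ := by simp only [Matrix.mul_assoc]

/-- For projections `A`, `B` the Hermitian matrix `(A + B - 1)²` commutes with `A`, so the common
eigenvectors of the two span the space; hence one of them is not annihilated by `N`. -/
theorem exists_pair_vector {n X : Type*} [Fintype n] [DecidableEq n]
    {A B : Matrix n n ℂ} (hA : A.IsHermitian) (hB : B.IsHermitian) (hAA : A * A = A)
    (hBB : B * B = B) {N : Matrix X n ℂ} (hN : N ≠ 0) :
    ∃ w : n → ℂ, N *ᵥ w ≠ 0 ∧ (A *ᵥ w = w ∨ A *ᵥ w = 0) ∧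
      ∃ c : ℂ, ((A + B - 1) * (A + B - 1)) *ᵥ w = c • w := by
  by_contra! hcon
  set S := (A + B - 1) * (A + B - 1) with hS
  have hSA : S * A = A * S := by
    have h1 : S = A * B + B * A - A - B + 1 := by
      rw [hS]; simp only [mul_add, add_mul, mul_sub, sub_mul, hAA, hBB, mul_one, one_mul]; abel
    rw [h1]
    simp only [mul_add, add_mul, mul_sub, sub_mul, mul_one, one_mul, hAA, Matrix.mul_assoc]
    simp only [← Matrix.mul_assoc, hAA]
    abel
  have hSh : S.IsHermitian := by
    have h1 : (A + B - 1).IsHermitian := (hA.add hB).sub isHermitian_one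
    rw [IsHermitian, hS, conjTranspose_mul, h1.eq]
  have key : ∀ u : n → ℂ, (∃ c : ℂ, S *ᵥ u = c • u) → N *ᵥ u = 0 := by
    rintro u ⟨c, hc⟩
    have h1 : S *ᵥ (A *ᵥ u) = c • (A *ᵥ u) := by
      rw [mulVec_mulVec, hSA, ← mulVec_mulVec, hc, mulVec_smul]
    have h2 : S *ᵥ (u - A *ᵥ u) = c • (u - A *ᵥ u) := by
      rw [mulVec_sub, h1, hc, smul_sub]
    have h3 : A *ᵥ (A *ᵥ u) = A *ᵥ u := by rw [mulVec_mulVec, hAA]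
    have h4 : A *ᵥ (u - A *ᵥ u) = 0 := by rw [mulVec_sub, h3, sub_self]
    have h5 : N *ᵥ (A *ᵥ u) = 0 := by
      by_contra h
      exact hcon _ h (Or.inl h3) c h1
    have h6 : N *ᵥ (u - A *ᵥ u) = 0 := by
      by_contra h
      exact hcon _ h (Or.inr h4) c h2
    rw [mulVec_sub, h5, sub_zero] at h6
    exact h6
  obtain ⟨U, l, hU, hU', hSU⟩ := exists_diagonalization hSh
  have h7 : N * U = 0 := by
    ext x i
    have h8 : S *ᵥ (U *ᵥ Pi.single i 1) = (l i : ℂ) • (U *ᵥ Pi.single i 1) := by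
      rw [hSU, mulVec_mulVec, Matrix.mul_assoc, hU', Matrix.mul_one, ← mulVec_mulVec,
        diagonal_mulVec_single, ← mulVec_smul]
      congr 1
      ext j
      by_cases hj : j = i
      · subst hj; simp
      · simp [hj]
    have := congrFun (key _ ⟨_, h8⟩) x
    rw [mulVec_mulVec] at this
    simpa using this
  apply hN
  rw [← Matrix.mul_one N, ← hU, ← Matrix.mul_assoc, h7, Matrix.zero_mul]

/-- The finite-dimensional form of Jordan's lemma that is used: projections `A`, `B` commute with
the projection `W Wᴴ` onto some subspace of dimension at most `2`, which can be chosen not to be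
annihilated by a given `N ≠ 0`. It is the span of `w` and `B w`, for `w` as in
`exists_pair_vector`. A one-dimensional span is allowed, and then `W` is not an isometry. -/
theorem exists_invariant_partial_isometry {n X : Type*} [Fintype n] [DecidableEq n]
    {A B : Matrix n n ℂ} (hA : A.IsHermitian) (hB : B.IsHermitian) (hAA : A * A = A)
    (hBB : B * B = B) {N : Matrix X n ℂ} (hN : N ≠ 0) :
    ∃ W : Matrix n (Fin 2) ℂ, W * Wᴴ * W = W ∧ N * W ≠ 0 ∧
      A * (W * Wᴴ) = (W * Wᴴ) * A ∧ B * (W * Wᴴ) = (W * Wᴴ) * B := by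
  obtain ⟨w, hw, hAw, c, hc⟩ := exists_pair_vector hA hB hAA hBB hN
  let F : Matrix n (Fin 2) ℂ := (Matrix.of ![w, B *ᵥ w])ᵀ
  obtain ⟨W, X, Y, hW, hF, hWF⟩ := exists_partial_isometry F
  have hmulF : ∀ (M : Matrix n n ℂ) (a b c d : ℂ), M *ᵥ w = a • w + b • (B *ᵥ w) →
      M *ᵥ (B *ᵥ w) = c • w + d • (B *ᵥ w) → M * F = F * !![a, c; b, d] := by
    intro M a b c d h1 h2
    ext i j
    fin_cases j
    · have := congrFun h1 i
      simp only [mul_apply, Fin.sum_univ_two, F]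
      simpa [mulVec, dotProduct, mul_comm] using this
    · have := congrFun h2 i
      simp only [mul_apply, Fin.sum_univ_two, F]
      simpa [mulVec, dotProduct, mul_comm] using this
  have comm : ∀ (M : Matrix n n ℂ), M.IsHermitian → (∃ Z : Matrix (Fin 2) (Fin 2) ℂ, M * F = F * Z) →
      M * (W * Wᴴ) = (W * Wᴴ) * M := by
    rintro M hM ⟨Z, hZ⟩
    have h1 : M * W = W * (X * Z * Y) := by
      calc M * W = (M * F) * Y := by rw [hWF, Matrix.mul_assoc]
        _ = W * X * Z * Y := by rw [hZ, ← hF]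
        _ = _ := by simp only [Matrix.mul_assoc]
    have h2 : (W * Wᴴ) * (M * W) = M * W := by
      rw [h1, ← Matrix.mul_assoc, hW]
    have h3 : (W * Wᴴ) * M * (W * Wᴴ) = M * (W * Wᴴ) := by
      calc _ = (W * Wᴴ) * (M * W) * Wᴴ := by simp only [Matrix.mul_assoc]
        _ = _ := by rw [h2, Matrix.mul_assoc]
    have h4 := congrArg conjTranspose h3
    simp only [conjTranspose_mul, conjTranspose_conjTranspose, hM.eq] at h4
    rw [← h3, Matrix.mul_assoc (W * Wᴴ) M (W * Wᴴ)]
    exact h4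
  have hBBw : B *ᵥ (B *ᵥ w) = B *ᵥ w := by rw [mulVec_mulVec, hBB]
  have hcB : ((A + B - 1) *ᵥ (A *ᵥ w + B *ᵥ w - w)) = c • w := by
    rw [← hc, ← mulVec_mulVec]
    congr 1
    rw [sub_mulVec, add_mulVec, one_mulVec]
  refine ⟨W, hW, ?_, comm A hA ?_, comm B hB ⟨_, hmulF B 0 1 0 1 (by simp) (by simp [hBBw])⟩⟩
  · intro h
    apply hw
    have h1 : w = F *ᵥ Pi.single 0 1 := by
      ext i; simp [F]
    rw [h1, hF, mulVec_mulVec, ← Matrix.mul_assoc, h, Matrix.zero_mul, zero_mulVec]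
  · rcases hAw with h | h
    · refine ⟨_, hmulF A 1 0 c 0 (by simp [h]) ?_⟩
      rw [h, add_sub_cancel_left, sub_mulVec, add_mulVec, one_mulVec, hBBw,
        add_sub_cancel_right] at hcB
      rw [hcB]; simp
    · refine ⟨_, hmulF A 0 0 (c - 1) 1 (by simp [h]) ?_⟩
      rw [h, zero_add, mulVec_sub, sub_mulVec, sub_mulVec, add_mulVec, add_mulVec, one_mulVec,
        one_mulVec, hBBw, h, zero_add] at hcB
      simp only [sub_smul, ← hcB, one_smul]
      abel

/-! ### Alice against the other parties -/

/-- The value `Tr[ρ (X ⊗ T)]` as a linear function of Alice's operator `X`. -/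
def aliceValue {n R : Type*} [Fintype n] [Fintype R] (ρ : Matrix (n × R) (n × R) ℂ)
    (T : Matrix R R ℂ) : Matrix n n ℂ →ₗ[ℂ] ℂ where
  toFun X := (ρ * (X ⊗ₖ T)).trace
  map_add' X Y := by rw [add_kronecker, Matrix.mul_add, trace_add]
  map_smul' c X := by rw [smul_kronecker, Matrix.mul_smul, trace_smul]; rfl

/-- The unnormalized state `(W ⊗ 1)ᴴ ρ (W ⊗ 1)`, obtained by compressing Alice's space. -/
def compress {n m R : Type*} [Fintype n] [Fintype R] [DecidableEq R]
    (ρ : Matrix (n × R) (n × R) ℂ) (W : Matrix n m ℂ) : Matrix (m × R) (m × R) ℂ :=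
  (W ⊗ₖ (1 : Matrix R R ℂ))ᴴ * ρ * (W ⊗ₖ (1 : Matrix R R ℂ))

theorem aliceValue_compress {n m R : Type*} [Fintype n] [Fintype m] [Fintype R] [DecidableEq R]
    (ρ : Matrix (n × R) (n × R) ℂ) (W : Matrix n m ℂ) (T : Matrix R R ℂ) (X : Matrix m m ℂ) :
    aliceValue (compress ρ W) T X = aliceValue ρ T (W * X * Wᴴ) := by
  have h : (W * X * Wᴴ) ⊗ₖ T
      = (W ⊗ₖ (1 : Matrix R R ℂ)) * (X ⊗ₖ T) * (W ⊗ₖ (1 : Matrix R R ℂ))ᴴ := by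
    rw [conjTranspose_kronecker, ← mul_kronecker_mul, ← mul_kronecker_mul]
    simp
  change trace (compress ρ W * (X ⊗ₖ T)) = trace (ρ * ((W * X * Wᴴ) ⊗ₖ T))
  rw [h, compress, ← Matrix.mul_assoc, ← Matrix.mul_assoc, trace_mul_comm _ (_ᴴ)]
  simp only [Matrix.mul_assoc]

theorem trace_eq_aliceValue {n R : Type*} [Fintype n] [Fintype R] [DecidableEq R] [DecidableEq n]
    (ρ : Matrix (n × R) (n × R) ℂ) : ρ.trace = aliceValue ρ 1 1 := by
  change _ = trace (ρ * _)
  rw [one_kronecker_one, Matrix.mul_one]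

theorem aliceValue_smul {n R : Type*} [Fintype n] [Fintype R]
    (c : ℂ) (ρ : Matrix (n × R) (n × R) ℂ) (T : Matrix R R ℂ) (X : Matrix n n ℂ) :
    aliceValue (c • ρ) T X = c * aliceValue ρ T X := by
  change trace (c • ρ * _) = c * trace (ρ * _)
  rw [Matrix.smul_mul, trace_smul, smul_eq_mul]

theorem ofReal_re_aliceValue {n R : Type*} [Fintype n] [Fintype R]
    {ρ : Matrix (n × R) (n × R) ℂ} (hρ : ρ.IsHermitian) {T : Matrix R R ℂ} (hT : T.IsHermitian)
    {X : Matrix n n ℂ} (hX : X.IsHermitian) :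
    ((aliceValue ρ T X).re : ℂ) = aliceValue ρ T X := by
  rw [← Complex.conj_eq_iff_re]
  change star (trace (ρ * (X ⊗ₖ T))) = trace (ρ * (X ⊗ₖ T))
  rw [← trace_conjTranspose, conjTranspose_mul, conjTranspose_kronecker, hρ.eq, hT.eq, hX.eq,
    trace_mul_comm]

/-- The operator of outcome `a` for the two-outcome POVM `X, 1 - X`. -/
def binaryOutcome {n : Type*} [DecidableEq n] (X : Matrix n n ℂ) (a : Fin 2) :
    Matrix n n ℂ := if a = 0 then X else 1 - X

/-- A realization of `P` in which Alice has dimension `n`, state and measurements `ρ`, `E`, while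
the operators of the other parties are the fixed family `T`. Alice's setting and outcome are read
off from the global settings and outcomes by `σ` and `α`; `E s` is the effect of her outcome `0`
for setting `s`. -/
def IsModel {R : Type*} [Fintype R] [DecidableEq R] {I J : Type*} (σ : I → Fin 2)
    (α : J → Fin 2) (T : I → J → Matrix R R ℂ) (n : ℕ) (ρ : Matrix (Fin n × R) (Fin n × R) ℂ)
    (E : Fin 2 → Matrix (Fin n) (Fin n) ℂ) (P : I → J → ℝ) : Prop :=
  IsDensityMatrix ρ ∧ (∀ s, IsEffect (E s)) ∧
    ∀ xs as, (P xs as : ℂ) = aliceValue ρ (T xs as) (binaryOutcome (E (σ xs)) (α as))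

theorem IsEffect.isHermitian_binaryOutcome {n : Type*} [Fintype n] [DecidableEq n]
    {X : Matrix n n ℂ} (hX : IsEffect X) (a : Fin 2) : (binaryOutcome X a).IsHermitian := by
  unfold binaryOutcome
  split_ifs
  exacts [hX.1.1, hX.2.1]

theorem exists_isModel {R : Type*} [Fintype R] [DecidableEq R] {I J : Type*} (σ : I → Fin 2)
    (α : J → Fin 2) {T : I → J → Matrix R R ℂ} (hT : ∀ xs as, (T xs as).IsHermitian) {n : ℕ}
    {ρ : Matrix (Fin n × R) (Fin n × R) ℂ} {E : Fin 2 → Matrix (Fin n) (Fin n) ℂ}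
    (hρ : IsDensityMatrix ρ) (hE : ∀ s, IsEffect (E s)) :
    ∃ P, IsModel σ α T n ρ E P :=
  ⟨fun xs as => (aliceValue ρ (T xs as) (binaryOutcome (E (σ xs)) (α as))).re, hρ, hE,
    fun xs as => ofReal_re_aliceValue hρ.1.1 (hT xs as) ((hE _).isHermitian_binaryOutcome _)⟩

theorem eq_of_mem_extremePoints {I J : Type*} {Q : Set (I → J → ℝ)} {P P₁ P₂ : I → J → ℝ}
    (hP : P ∈ Q.extremePoints ℝ) (h₁ : P₁ ∈ Q) (h₂ : P₂ ∈ Q) {t : ℝ} (ht0 : 0 < t) (ht1 : t < 1)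
    (h : ∀ xs as, (P xs as : ℂ) = t * P₁ xs as + (1 - t) * P₂ xs as) : P₁ = P := by
  refine hP.2 h₁ h₂ ⟨t, 1 - t, ht0, sub_pos.2 ht1, by ring, ?_⟩
  ext xs as
  have := h xs as
  norm_cast at this
  simpa using this.symm

section Core

variable {R : Type*} [Fintype R] [DecidableEq R] {I J : Type*} {σ : I → Fin 2}
  {α : J → Fin 2} {T : I → J → Matrix R R ℂ} {Q : Set (I → J → ℝ)} {P : I → J → ℝ} {n : ℕ}
  {ρ : Matrix (Fin n × R) (Fin n × R) ℂ} {E : Fin 2 → Matrix (Fin n) (Fin n) ℂ}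

/-- Since the behaviour is affine in Alice's effects, extremality allows each of them to be
replaced by its support projection. -/
theorem exists_projective_model (hT : ∀ xs as, (T xs as).IsHermitian)
    (hQ : ∀ n ρ E P, IsModel σ α T n ρ E P → P ∈ Q) (hP : P ∈ Q.extremePoints ℝ)
    (h : IsModel σ α T n ρ E P) :
    ∃ E', IsModel σ α T n ρ E' P ∧ ∀ s, (E' s).IsHermitian ∧ E' s * E' s = E' s := by
  obtain ⟨hρ, hE, hval⟩ := h
  choose E' h1 h2 h3 h4 using fun s => exists_projection_part (hE s)
  have h5 := (Filter.eventually_all.2 h4).and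
    ((show ∀ᶠ t : ℝ in nhdsWithin 0 (Set.Ioi 0), t < 1 from
      nhdsWithin_le_nhds (Iio_mem_nhds zero_lt_one)).and self_mem_nhdsWithin)
  obtain ⟨t, ht, ht1, ht0⟩ := h5.exists
  choose C hC hEC using ht
  obtain ⟨P₁, hP₁⟩ := exists_isModel σ α hT hρ h3
  obtain ⟨P₂, hP₂⟩ := exists_isModel σ α hT hρ hC
  have : P₁ = P := by
    refine eq_of_mem_extremePoints hP (hQ _ _ _ _ hP₁) (hQ _ _ _ _ hP₂) ht0 ht1 ?_
    intro xs as
    rw [hval, hP₁.2.2, hP₂.2.2, ← smul_eq_mul, ← smul_eq_mul, ← map_smul, ← map_smul, ← map_add]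
    congr 1
    unfold binaryOutcome
    split_ifs
    · exact hEC _
    · rw [hEC (σ xs)]
      module
  subst this
  exact ⟨E', hP₁, fun s => ⟨h1 s, h2 s⟩⟩

theorem compress_posSemidef {n m R : Type*} [Fintype n] [Finite m] [Fintype R] [DecidableEq R]
    {ρ : Matrix (n × R) (n × R) ℂ} (hρ : ρ.PosSemidef) (W : Matrix n m ℂ) :
    (compress ρ W).PosSemidef := by
  exact hρ.conjTranspose_mul_mul_same _

/-- The complementary effect `1 - Wᴴ X W` is the compression of `1 - X` plus `1 - Wᴴ W`; the
latter vanishes if `W` is an isometry, and is a projection in general. -/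
theorem isEffect_compress {n m : Type*} [Fintype n] [Fintype m] [DecidableEq n] [DecidableEq m]
    {W : Matrix n m ℂ} (hW : W * Wᴴ * W = W) {X : Matrix n n ℂ} (hX : IsEffect X) :
    IsEffect (Wᴴ * X * W) := by
  refine ⟨hX.1.conjTranspose_mul_mul_same W, ?_⟩
  have h1 : (1 - Wᴴ * W)ᴴ * (1 - Wᴴ * W) = 1 - Wᴴ * W := by
    have : Wᴴ * W * (Wᴴ * W) = Wᴴ * W := by
      calc _ = Wᴴ * (W * Wᴴ * W) := by simp only [Matrix.mul_assoc]
        _ = _ := by rw [hW]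
    rw [conjTranspose_sub, conjTranspose_one, conjTranspose_mul, conjTranspose_conjTranspose]
    rw [mul_sub, sub_mul, sub_mul, this]
    simp
  have h2 : 1 - Wᴴ * X * W = (1 - Wᴴ * W)ᴴ * (1 - Wᴴ * W) + Wᴴ * (1 - X) * W := by
    rw [h1, Matrix.mul_sub, Matrix.sub_mul, Matrix.mul_one]
    abel
  rw [h2]
  exact (posSemidef_conjTranspose_mul_self _).add (hX.2.conjTranspose_mul_mul_same W)

theorem isDensityMatrix_inv_smul {ι : Type*} [Fintype ι] [DecidableEq ι] {τ : Matrix ι ι ℂ}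
    (hτ : τ.PosSemidef) {p : ℝ} (hp : 0 < p) (h : τ.trace = p) :
    IsDensityMatrix ((p : ℂ)⁻¹ • τ) := by
  refine ⟨hτ.smul (by rw [← Complex.ofReal_inv]; exact_mod_cast (inv_pos.2 hp).le), ?_⟩
  rw [trace_smul, h, smul_eq_mul, inv_mul_cancel₀]
  exact_mod_cast hp.ne'

open scoped MatrixOrder Matrix.Norms.L2Operator in
theorem exists_eq_conjTranspose_mul_self_s2 {ι : Type*} [Fintype ι] [DecidableEq ι]
    {τ : Matrix ι ι ℂ} (hτ : τ.PosSemidef) : ∃ D : Matrix ι ι ℂ, τ = Dᴴ * D :=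
  CStarAlgebra.nonneg_iff_eq_star_mul_self.mp hτ.nonneg

/-- Among the invariant subspaces of dimension at most `2` there is one on which the state has
nonzero weight. -/
theorem exists_support_block {n R : Type*} [Fintype n] [DecidableEq n] [Fintype R] [DecidableEq R]
    {ρ : Matrix (n × R) (n × R) ℂ} (hρ : IsDensityMatrix ρ)
    {A B : Matrix n n ℂ} (hA : A.IsHermitian) (hB : B.IsHermitian) (hAA : A * A = A)
    (hBB : B * B = B) :
    ∃ W : Matrix n (Fin 2) ℂ, W * Wᴴ * W = W ∧ compress ρ W ≠ 0 ∧
      A * (W * Wᴴ) = (W * Wᴴ) * A ∧ B * (W * Wᴴ) = (W * Wᴴ) * B := by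
  -- `ρ.submatrix id (·, r)` is `w ↦ ρ (w ⊗ e_r)`; not all of these maps vanish.
  have : ∃ r, ρ.submatrix id (fun j => (j, r)) ≠ 0 := by
    by_contra! hcon
    have : ρ = 0 := by
      ext x ⟨j, r⟩
      exact congrFun (congrFun (hcon r) x) j
    have h := hρ.2
    simp [this] at h
  obtain ⟨r, hr⟩ := this
  obtain ⟨W, hW, hNW, hWA, hWB⟩ := exists_invariant_partial_isometry hA hB hAA hBB hr
  refine ⟨W, hW, fun h0 => hNW ?_, hWA, hWB⟩
  have h1 : ρ * (W ⊗ₖ (1 : Matrix R R ℂ)) = 0 := by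
    obtain ⟨D, hD⟩ := exists_eq_conjTranspose_mul_self_s2 hρ.1
    have h2 : D * (W ⊗ₖ (1 : Matrix R R ℂ)) = 0 := by
      rw [← conjTranspose_mul_self_eq_zero, ← h0, compress, hD, conjTranspose_mul]
      simp only [Matrix.mul_assoc]
    rw [hD, Matrix.mul_assoc, h2, Matrix.mul_zero]
  ext x k
  have h3 := congrFun (congrFun h1 x) (k, r)
  rw [mul_apply, Fintype.sum_prod_type] at h3
  simpa [mul_apply, kroneckerMap_apply, one_apply] using h3

/-- Cutting Alice's space along an invariant block `V` and its complement writes `P` as a mixture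
of a behaviour with a qubit for Alice and a behaviour with the original dimension; by extremality
the former equals `P`. The operators `T` of the other parties do not change. -/
theorem exists_qubit_model (hT : ∀ xs as, (T xs as).IsHermitian)
    (hQ : ∀ n ρ E P, IsModel σ α T n ρ E P → P ∈ Q) (hP : P ∈ Q.extremePoints ℝ)
    (h : IsModel σ α T n ρ E P) :
    ∃ ρ' E', IsModel σ α T 2 ρ' E' P := by
  obtain ⟨E, ⟨hρ, hE, hval⟩, hproj⟩ := exists_projective_model hT hQ hP h
  obtain ⟨W, hW, hne, hc0, hc1⟩ := exists_support_block hρ (hproj 0).1 (hproj 1).1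
    (hproj 0).2 (hproj 1).2
  set V := W * Wᴴ with hV
  have hcomm : ∀ s, E s * V = V * E s := Fin.forall_fin_two.2 ⟨hc0, hc1⟩
  have hVh : Vᴴ = V := by simp [hV]
  have hVV : V * V = V := by rw [hV, ← Matrix.mul_assoc, hW]
  have hV' : (1 - V)ᴴ = 1 - V := by simp [hVh]
  have hps1 := compress_posSemidef hρ.1 W
  have hps2 := compress_posSemidef hρ.1 (1 - V)
  have htr : (compress ρ W).trace + (compress ρ (1 - V)).trace = 1 := by
    rw [trace_eq_aliceValue, trace_eq_aliceValue, aliceValue_compress, aliceValue_compress,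
      ← map_add, ← hρ.2, trace_eq_aliceValue ρ, hV']
    congr 1
    simp [mul_sub, sub_mul, hVV, ← hV]
  obtain ⟨p, hp⟩ : ∃ p : ℝ, (compress ρ W).trace = p :=
    ⟨_, (Complex.nonneg_iff.1 hps1.trace_nonneg).elim fun _ h => Complex.ext rfl h.symm⟩
  have hp0 : 0 < p := by
    have h1 : 0 ≤ (p : ℂ) := hp ▸ hps1.trace_nonneg
    have h2 : p ≠ 0 := by
      rintro rfl
      exact hne (hps1.trace_eq_zero_iff.1 (by simpa using hp))
    exact lt_of_le_of_ne (by exact_mod_cast h1) h2.symm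
  have hp' : (compress ρ (1 - V)).trace = (1 - p : ℝ) := by
    push_cast
    rw [← hp, ← htr, add_sub_cancel_left]
  have hp1 : p ≤ 1 := by
    have h1 : 0 ≤ ((1 - p : ℝ) : ℂ) := hp' ▸ hps2.trace_nonneg
    have : 0 ≤ 1 - p := by exact_mod_cast h1
    linarith
  obtain ⟨P₁, hP₁⟩ := exists_isModel σ α hT (isDensityMatrix_inv_smul hps1 hp0 hp)
    (fun s => isEffect_compress hW (hE s))
  -- Alice's operators commute with `V`, so the off-diagonal blocks of `ρ` do not contribute.
  have hsplit : ∀ xs as, (P xs as : ℂ) = p * P₁ xs as +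
      aliceValue (compress ρ (1 - V)) (T xs as) (binaryOutcome (E (σ xs)) (α as)) := by
    intro xs as
    have hpc : (p : ℂ) ≠ 0 := by exact_mod_cast hp0.ne'
    rw [hP₁.2.2, aliceValue_smul, mul_inv_cancel_left₀ hpc, aliceValue_compress,
      aliceValue_compress, ← map_add, hval]
    congr 1
    have e1 : ∀ X : Matrix (Fin n) (Fin n) ℂ, W * (Wᴴ * X * W) * Wᴴ = V * X * V := by
      intro X; simp only [hV, Matrix.mul_assoc]
    have e2 : E (σ xs) * V * V = E (σ xs) * V := by rw [Matrix.mul_assoc, hVV]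
    unfold binaryOutcome
    rw [hV']
    split_ifs
    · rw [e1]
      simp only [mul_sub, sub_mul, mul_one, one_mul, e2, ← hcomm]
      abel
    · rw [Matrix.mul_sub, Matrix.sub_mul, e1, Matrix.mul_one, ← hV]
      simp only [mul_sub, sub_mul, mul_one, one_mul, e2, ← hcomm, hVV]
      abel
  have hfin : P₁ = P := by
    rcases hp1.lt_or_eq with hlt | rfl
    · have hp1' : 0 < 1 - p := sub_pos.2 hlt
      obtain ⟨P₂, hP₂⟩ := exists_isModel σ α hT (isDensityMatrix_inv_smul hps2 hp1' hp') hE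
      refine eq_of_mem_extremePoints hP (hQ _ _ _ _ hP₁) (hQ _ _ _ _ hP₂) hp0 hlt ?_
      intro xs as
      have hpc : (1 - p : ℂ) ≠ 0 := by exact_mod_cast hp1'.ne'
      rw [hsplit, hP₂.2.2, aliceValue_smul]
      push_cast
      rw [mul_inv_cancel_left₀ hpc]
    -- for `p = 1` the complement carries no weight, and no second behaviour is available
    · have h0 : compress ρ (1 - V) = 0 := hps2.trace_eq_zero_iff.1 (by simpa using hp')
      ext xs as
      have := hsplit xs as
      have h00 : ∀ X, aliceValue (compress ρ (1 - V)) (T xs as) X = 0 := by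
        intro X
        change trace (compress ρ (1 - V) * _) = 0
        rw [h0, Matrix.zero_mul, trace_zero]
      rw [h00, add_zero, Complex.ofReal_one, one_mul] at this
      exact_mod_cast this.symm
  subst hfin
  exact ⟨_, _, hP₁⟩

end Core

/-! ### Splitting off the first tensor factor -/

section Split

variable {N : ℕ} [NeZero N]

/-- The tensor product over all parties except party `0`, encoded as in `tensorN`. -/
def restTensor (e : {i : Fin N // i ≠ 0} → ℕ) (M : ∀ i, Matrix (Fin (e i)) (Fin (e i)) ℂ) :
    Matrix (∀ i, Fin (e i)) (∀ i, Fin (e i)) ℂ :=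
  Matrix.of fun r c => ∏ i, M i (r i) (c i)

theorem isHermitian_restTensor (e : {i : Fin N // i ≠ 0} → ℕ)
    {M : ∀ i, Matrix (Fin (e i)) (Fin (e i)) ℂ} (hM : ∀ i, (M i).IsHermitian) :
    (restTensor e M).IsHermitian := by
  ext r c
  simp only [restTensor, conjTranspose_apply, of_apply, star_prod]
  exact Finset.prod_congr rfl fun i _ => (hM i).apply _ _

theorem tensorN_eq_submatrix (d : Fin N → ℕ) (M : ∀ i, Matrix (Fin (d i)) (Fin (d i)) ℂ) :
    tensorN d M = (M 0 ⊗ₖ restTensor (fun i : {i : Fin N // i ≠ 0} => d i) fun i => M i).submatrix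
      (Equiv.piSplitAt 0 fun i => Fin (d i)) (Equiv.piSplitAt 0 fun i => Fin (d i)) := by
  ext r c
  simp only [tensorN, restTensor, of_apply, submatrix_apply, kroneckerMap_apply]
  exact Fintype.prod_eq_mul_prod_subtype_ne (fun i => M i (r i) (c i)) 0

theorem trace_submatrix_equiv {ι κ : Type*} [Fintype ι] [Fintype κ] (f : ι ≃ κ)
    (A : Matrix κ κ ℂ) : (A.submatrix f f).trace = A.trace :=
  f.sum_comp fun i => A i i

theorem IsDensityMatrix.submatrix_equiv {ι κ : Type*} [Fintype ι] [Fintype κ] [DecidableEq ι]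
    [DecidableEq κ] {A : Matrix κ κ ℂ} (hA : IsDensityMatrix A) (f : ι ≃ κ) :
    IsDensityMatrix (A.submatrix f f) :=
  ⟨hA.1.submatrix f, by rw [trace_submatrix_equiv, hA.2]⟩

theorem trace_mul_tensorN (d : Fin N → ℕ) (M : ∀ i, Matrix (Fin (d i)) (Fin (d i)) ℂ)
    (τ : Matrix (Fin (d 0) × ∀ i : {i : Fin N // i ≠ 0}, Fin (d i))
      (Fin (d 0) × ∀ i : {i : Fin N // i ≠ 0}, Fin (d i)) ℂ) :
    (τ.submatrix (Equiv.piSplitAt 0 fun i => Fin (d i)) (Equiv.piSplitAt 0 fun i => Fin (d i))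
      * tensorN d M).trace
      = aliceValue τ (restTensor (fun i : {i : Fin N // i ≠ 0} => d i) fun i => M i) (M 0) := by
  rw [tensorN_eq_submatrix, submatrix_mul_equiv, trace_submatrix_equiv]
  rfl

variable {x o : Fin N → ℕ} {P : (∀ i, Fin (x i)) → (∀ i, Fin (o i)) → ℝ}

theorem IsEffect.isPOVM_binaryOutcome {n : Type*} [Fintype n] [DecidableEq n]
    {X : Matrix n n ℂ} (hX : IsEffect X) {k : ℕ} (hk : k = 2) :
    IsPOVM fun a : Fin k => binaryOutcome X (finCongr hk a) := by
  subst hk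
  refine ⟨?_, ?_⟩
  · intro a
    dsimp only [binaryOutcome]
    split_ifs
    exacts [hX.1, hX.2]
  · simp [Fin.sum_univ_two, binaryOutcome]

theorem IsPOVM.exists_isEffect {n : Type*} [Fintype n] [DecidableEq n] {k : ℕ} (hk : k = 2)
    {M : Fin k → Matrix n n ℂ} (hM : IsPOVM M) :
    ∃ X, IsEffect X ∧ ∀ a, M a = binaryOutcome X (finCongr hk a) := by
  subst hk
  have h : M 1 = 1 - M 0 := by rw [← hM.2, Fin.sum_univ_two, add_sub_cancel_left]
  refine ⟨M 0, ⟨hM.1 0, h ▸ hM.1 1⟩, ?_⟩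
  rw [Fin.forall_fin_two]
  simp [binaryOutcome, h]

/-- The dimensions are given up to the equations `hn`, `he`, so that the lemma applies directly
to `Function.update d 0 n`. -/
theorem realizes_of_isModel (hx : x 0 = 2) (ho : o 0 = 2) {d : Fin N → ℕ} {n : ℕ}
    {e : {i : Fin N // i ≠ 0} → ℕ} (hn : d 0 = n) (he : (fun i : {i : Fin N // i ≠ 0} => d i) = e)
    {M : ∀ i : {i : Fin N // i ≠ 0}, Fin (x i) → Fin (o i) → Matrix (Fin (e i)) (Fin (e i)) ℂ}
    (hM : ∀ i xi, IsPOVM (M i xi))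
    {ρ : Matrix (Fin n × ∀ i, Fin (e i)) (Fin n × ∀ i, Fin (e i)) ℂ}
    {E : Fin 2 → Matrix (Fin n) (Fin n) ℂ}
    (h : IsModel (fun xs : ∀ i, Fin (x i) => finCongr hx (xs 0))
      (fun as : ∀ i, Fin (o i) => finCongr ho (as 0))
      (fun xs as => restTensor e fun i => M i (xs i) (as i)) n ρ E P) :
    Realizes x o d P := by
  subst hn he
  obtain ⟨hρ, hE, hval⟩ := h
  let M' : ∀ i, Fin (x i) → Fin (o i) → Matrix (Fin (d i)) (Fin (d i)) ℂ :=
    (Equiv.piSplitAt (0 : Fin N)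
      fun i => Fin (x i) → Fin (o i) → Matrix (Fin (d i)) (Fin (d i)) ℂ).symm
      (fun s a => binaryOutcome (E (finCongr hx s)) (finCongr ho a), M)
  have h0 : M' 0 = fun s a => binaryOutcome (E (finCongr hx s)) (finCongr ho a) := by
    simp [M', Equiv.piSplitAt]
  have h1 : ∀ i : {i : Fin N // i ≠ 0}, M' i = M i := by
    intro i
    simp [M', Equiv.piSplitAt, i.2]
  refine ⟨_, hρ.submatrix_equiv (Equiv.piSplitAt 0 fun i => Fin (d i)), M', ?_, ?_⟩
  · intro i xi
    by_cases hi : i = 0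
    · subst hi
      rw [h0]
      exact (hE _).isPOVM_binaryOutcome ho
    · rw [h1 ⟨i, hi⟩]
      exact hM ⟨i, hi⟩ xi
  · intro xs as
    rw [trace_mul_tensorN, hval, h0]
    simp only [h1]

theorem exists_isModel_of_realizes (hx : x 0 = 2) (ho : o 0 = 2) {d : Fin N → ℕ}
    (h : Realizes x o d P) :
    ∃ (M : ∀ i : {i : Fin N // i ≠ 0}, Fin (x i) → Fin (o i) →
        Matrix (Fin (d i)) (Fin (d i)) ℂ) (ρ : _) (E : _), (∀ i xi, IsPOVM (M i xi)) ∧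
      IsModel (fun xs : ∀ i, Fin (x i) => finCongr hx (xs 0))
      (fun as : ∀ i, Fin (o i) => finCongr ho (as 0))
      (fun xs as => restTensor (fun i : {i : Fin N // i ≠ 0} => d i) fun i => M i (xs i) (as i)) (d 0) ρ E P := by
  obtain ⟨ρ, hρ, M, hM, hval⟩ := h
  choose E hE hME using fun s => IsPOVM.exists_isEffect ho (hM 0 ((finCongr hx).symm s))
  refine ⟨fun i => M i, ρ.submatrix (Equiv.piSplitAt 0 fun i => Fin (d i)).symm
    (Equiv.piSplitAt 0 fun i => Fin (d i)).symm, E, fun i xi => hM i xi,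
    hρ.submatrix_equiv _, hE, ?_⟩
  intro xs as
  rw [← hME, Equiv.symm_apply_apply, hval, ← trace_mul_tensorN d fun i => M i (xs i) (as i)]
  congr 2
  simp

end Split

theorem extremal_realizable_with_qubit_for_Alice_keeping_other_dims
    (N : ℕ) [NeZero N] (x o : Fin N → ℕ) (hx : x 0 = 2) (ho : o 0 = 2)
    (P : (∀ i, Fin (x i)) → (∀ i, Fin (o i)) → ℝ)
    (hP : P ∈ Set.extremePoints ℝ (QuantumSet x o))
    (d : Fin N → ℕ) (hd : Realizes x o d P) :
    Realizes x o (Function.update d 0 2) P := by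
  obtain ⟨M, ρ, E, hM, hmodel⟩ := exists_isModel_of_realizes hx ho hd
  have hrest : ∀ n, (fun i : {i : Fin N // i ≠ 0} => Function.update d 0 n i)
      = fun i : {i : Fin N // i ≠ 0} => d i :=
    fun n => funext fun i => Function.update_of_ne i.2 _ _
  obtain ⟨ρ', E', h'⟩ : ∃ ρ' E', IsModel _ _ _ 2 ρ' E' P := by
    refine exists_qubit_model (Q := QuantumSet x o) ?_ ?_ hP hmodel
    · intro xs as
      exact isHermitian_restTensor _ fun i => ((hM i (xs i)).1 (as i)).1
    · intro n ρ E P h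
      exact ⟨Function.update d 0 n,
        realizes_of_isModel hx ho (Function.update_self ..) (hrest n) hM h⟩
  exact realizes_of_isModel hx ho (Function.update_self ..) (hrest 2) hM h'
end
end

section
/- (Schmidt decomposition) Let |ψ⟩ be a unit vector in the tensor product H_A ⊗ H_B of two finite-dimensional complex inner product spaces with dim H_A = d_A and dim H_B = d_B, and set d' := min(d_A, d_B). Then there exist orthonormal families {|u₁⟩,...,|u_{d'}⟩} ⊂ H_A and {|v₁⟩,...,|v_{d'}⟩} ⊂ H_B and nonnegative reals λ₁,...,λ_{d'} with Σ_i λ_i² = 1 such that |ψ⟩ = Σ_{i=1}^{d'} λ_i |u_i⟩ ⊗ |v_i⟩. -/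
/-!
Read `ψ` as an `m × n` matrix `M`, with `m ≤ n` (the other case follows by exchanging the factors).
Let `u` be an orthonormal eigenbasis of the Hermitian matrix `M * Mᴴ`, and expand each column of
`M` in it: `M i j = ∑ k, u k i * w k j`, where `w k j` is the inner product of `u k` with the `j`-th
column. Because the `u k` are eigenvectors of `M * Mᴴ`, the rows `w k` are pairwise orthogonal, and
by Parseval applied to each column `∑ k, ‖w k‖ ^ 2 = ‖ψ‖ ^ 2`. Put `lam k = ‖w k‖`. The nonzero
`w k`, once normalized, extend to an orthonormal basis of the larger factor, since `m ≤ n`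
(`exists_orthonormal_smul_eq`); this supplies the vectors `v k` also where `lam k = 0`.
-/

open scoped BigOperators

/-- A pairwise orthogonal family with at most `n` members in an `n`-dimensional space is an
orthonormal family scaled by the norms, even if some members vanish. -/
lemma exists_orthonormal_smul_eq {m n : ℕ} (hmn : m ≤ n)
    (w : Fin m → EuclideanSpace ℂ (Fin n)) (hw : ∀ k l, k ≠ l → inner ℂ (w k) (w l) = 0) :
    ∃ v : Fin m → EuclideanSpace ℂ (Fin n), Orthonormal ℂ v ∧
      ∀ k, w k = ((‖w k‖ : ℝ) : ℂ) • v k := by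
  classical
  -- Indexing by `Fin n` lets the extension theorem produce a basis with this very index type.
  let g : Fin n → EuclideanSpace ℂ (Fin n) := fun j =>
    if h : (j : ℕ) < m then ((‖w ⟨j, h⟩‖⁻¹ : ℝ) : ℂ) • w ⟨j, h⟩ else 0
  have hg : Orthonormal ℂ (Set.domRestrict {j | g j ≠ 0} g) := by
    refine ⟨?_, ?_⟩
    · rintro ⟨j, hj⟩
      change ‖g j‖ = 1
      by_cases h : (j : ℕ) < m
      · have hne : w ⟨j, h⟩ ≠ 0 := by
          intro h0
          exact hj (by simp [g, h, h0])
        simp [g, h, norm_smul, hne]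
      · exact absurd (by simp [g, h]) hj
    · rintro ⟨j, hj⟩ ⟨l, hl⟩ hjl
      change inner ℂ (g j) (g l) = 0
      have hjl' : (j : ℕ) ≠ l := fun h => hjl (Subtype.ext (Fin.ext h))
      by_cases h : (j : ℕ) < m
      · by_cases h' : (l : ℕ) < m
        · have := hw ⟨j, h⟩ ⟨l, h'⟩ (by simpa [Fin.ext_iff] using hjl')
          simp [g, h, h', this]
        · simp [g, h']
      · simp [g, h]
  obtain ⟨b, hb⟩ := hg.exists_orthonormalBasis_extension_of_card_eq (by simp)
  refine ⟨fun k => b (Fin.castLE hmn k),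
    b.orthonormal.comp _ (Fin.castLE_injective hmn), fun k => ?_⟩
  by_cases h0 : w k = 0
  · simp [h0]
  · have hgk : g (Fin.castLE hmn k) = ((‖w k‖⁻¹ : ℝ) : ℂ) • w k := by simp [g]
    have hne : ((‖w k‖ : ℝ) : ℂ) ≠ 0 := by simpa using h0
    have hmem : g (Fin.castLE hmn k) ≠ 0 := by
      rw [hgk]
      simpa using h0
    dsimp only
    rw [hb _ hmem, hgk, smul_smul, Complex.ofReal_inv, mul_inv_cancel₀ hne, one_smul]

/-- The decomposition when the first factor is the smaller one. The number of terms is a separate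
variable `r`, so that it can be instantiated with a minimum equal to `m`. -/
lemma schmidt_of_le {m n r : ℕ} (hr : r = m) (hmn : m ≤ n)
    (M : Matrix (Fin m) (Fin n) ℂ) (hM : ∑ i, ∑ j, ‖M i j‖ ^ 2 = 1) :
    ∃ (u : Fin r → EuclideanSpace ℂ (Fin m))
      (v : Fin r → EuclideanSpace ℂ (Fin n))
      (lam : Fin r → ℝ),
      Orthonormal ℂ u ∧ Orthonormal ℂ v ∧
      (∀ k, 0 ≤ lam k) ∧ (∑ k, lam k ^ 2) = 1 ∧
      ∀ i j, M i j = ∑ k, (lam k : ℂ) * u k i * v k j := by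
  subst hr
  have hH : (M * M.conjTranspose).IsHermitian := Matrix.isHermitian_mul_conjTranspose_self M
  let u := hH.eigenvectorBasis
  let col : Fin n → EuclideanSpace ℂ (Fin r) := fun j => WithLp.toLp 2 fun i => M i j
  let w : Fin r → EuclideanSpace ℂ (Fin n) := fun k =>
    WithLp.toLp 2 fun j => inner ℂ (u k) (col j)
  have hwM : ∀ k, (w k).ofLp = Matrix.vecMul (star (u k).ofLp) M := by
    intro k
    ext j
    simp [w, col, PiLp.inner_apply, Matrix.vecMul, dotProduct, mul_comm]
  have horth : ∀ k l, k ≠ l → inner ℂ (w k) (w l) = 0 := by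
    intro k l hkl
    have hu : (u k).ofLp ⬝ᵥ star (u l).ofLp = 0 := by
      rw [← EuclideanSpace.inner_eq_star_dotProduct]
      exact u.orthonormal.2 hkl.symm
    rw [EuclideanSpace.inner_eq_star_dotProduct, hwM, hwM, Matrix.star_vecMul, star_star,
      ← Matrix.dotProduct_mulVec, Matrix.mulVec_mulVec, hH.mulVec_eigenvectorBasis,
      dotProduct_smul, dotProduct_comm]
    exact (congrArg _ hu).trans (smul_zero _)
  obtain ⟨v, hv, hwv⟩ := exists_orthonormal_smul_eq hmn w horth
  refine ⟨u, v, fun k => ‖w k‖, u.orthonormal, hv, fun k => norm_nonneg _, ?_, fun i j => ?_⟩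
  · rw [← hM, Finset.sum_comm (f := fun i j => ‖M i j‖ ^ 2)]
    simp_rw [EuclideanSpace.norm_sq_eq]
    rw [Finset.sum_comm]
    refine Finset.sum_congr rfl fun j _ => ?_
    have := u.sum_sq_norm_inner_right (col j)
    rw [EuclideanSpace.norm_sq_eq] at this
    exact this
  · have h1 := congrArg (fun x : EuclideanSpace ℂ (Fin r) => x i) (u.sum_repr' (col j))
    have h2 : M i j = ∑ k, w k j * u k i := by
      simpa [col, w] using h1.symm
    rw [h2]
    refine Finset.sum_congr rfl fun k _ => ?_
    have h3 : w k j = ((‖w k‖ : ℝ) : ℂ) * v k j := by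
      simpa using congrArg (fun x : EuclideanSpace ℂ (Fin n) => x j) (hwv k)
    rw [h3]
    ring

theorem schmidt_decomposition (dA dB : ℕ)
    (ψ : EuclideanSpace ℂ (Fin dA × Fin dB)) (hψ : ‖ψ‖ = 1) :
    ∃ (u : Fin (min dA dB) → EuclideanSpace ℂ (Fin dA))
      (v : Fin (min dA dB) → EuclideanSpace ℂ (Fin dB))
      (lam : Fin (min dA dB) → ℝ),
      Orthonormal ℂ u ∧ Orthonormal ℂ v ∧
      (∀ k, 0 ≤ lam k) ∧ (∑ k, lam k ^ 2) = 1 ∧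
      ∀ p : Fin dA × Fin dB, ψ p = ∑ k, (lam k : ℂ) * u k p.1 * v k p.2 := by
  have hsum : ∑ i, ∑ j, ‖ψ (i, j)‖ ^ 2 = 1 := by
    rw [← Fintype.sum_prod_type' (f := fun i j => ‖ψ (i, j)‖ ^ 2), ← EuclideanSpace.norm_sq_eq,
      hψ, one_pow]
  rcases le_total dA dB with h | h
  · obtain ⟨u, v, lam, hu, hv, h0, h1, hp⟩ :=
      schmidt_of_le (min_eq_left h) h (fun i j => ψ (i, j)) hsum
    exact ⟨u, v, lam, hu, hv, h0, h1, fun p => hp p.1 p.2⟩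
  · obtain ⟨v, u, lam, hv, hu, h0, h1, hp⟩ :=
      schmidt_of_le (min_eq_right h) h (fun j i => ψ (i, j)) (by rw [Finset.sum_comm]; exact hsum)
    refine ⟨u, v, lam, hu, hv, h0, h1, fun p => (hp p.2 p.1).trans ?_⟩
    exact Finset.sum_congr rfl fun k _ => by ring
end

section
/- If a bipartite quantum correlation P(a,b|x,y) is realizable with local Hilbert space dimensions (d_A, d_B), both finite, then it is realizable with both local Hilbert space dimensions equal to d := min(d_A, d_B), i.e. with local dimensions (d, d). -/
/-!
Let `dB ≤ dA` and let `ρ`, `M`, `N` realize `P`. Whatever Alice's dimension, her measurements only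
act by steering Bob's system: the operators `S x a = Tr_A [ρ (M x a ⊗ 1)]` on `ℂ^dB` are positive,
they sum over `a` to Bob's reduced state `R = Tr_A ρ` for every `x`, and
`P(a,b|x,y) = Tr [S x a * N y b]` (`steer_posSemidef`, `steer_sum`, `trace_steer_mul`).

Conversely every positive decomposition `∑ a, S a = R` is of the form `S a = T * E a * T` with
`T = √R` and `E` a POVM on the same space (`exists_povm_of_sum`): with `G` the pseudo-inverse of `T`
one takes `E a = G * S a * G`, completed by the projection onto the kernel of `R`. Finally
`Tr [T * E a * T * N b]` is the expectation of `(E a)ᵀ ⊗ N b` in the pure state on `ℂ^dB ⊗ ℂ^dB`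
whose coefficient matrix is `T` (`trace_pure`), which gives a model with both dimensions `dB`.
The case `dA ≤ dB` follows by exchanging the parties (`RealizesBi.swap`).
-/

/- STATEMENT 8: if a bipartite quantum correlation is realizable with finite local Hilbert
space dimensions `(dA, dB)`, then it is realizable with both local dimensions equal to
`d = min dA dB`.  (Realizability with dimensions `(d₁, d₂)` means existence of a model on
Hilbert spaces of dimensions at most `(d₁, d₂)`.) -/

open scoped BigOperators Kronecker Matrix ComplexOrder

noncomputable section

/-- `RealizesBi nx ny na nb dA dB P`: the behaviour `P x y a b = P(a,b|x,y)` of the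
bipartite Bell scenario (Alice: `nx` settings, `na` outcomes; Bob: `ny` settings, `nb`
outcomes) is realized by a density matrix on `ℂ^dA ⊗ ℂ^dB` and local POVMs, i.e. with
local Hilbert space dimensions `(dA, dB)`. -/
def RealizesBi (nx ny na nb dA dB : ℕ)
    (P : Fin nx → Fin ny → Fin na → Fin nb → ℝ) : Prop :=
  ∃ ρ : Matrix (Fin dA × Fin dB) (Fin dA × Fin dB) ℂ,
    IsDensityMatrix ρ ∧
    ∃ (M : Fin nx → Fin na → Matrix (Fin dA) (Fin dA) ℂ)
      (Nb : Fin ny → Fin nb → Matrix (Fin dB) (Fin dB) ℂ),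
      (∀ xi, IsPOVM (M xi)) ∧ (∀ yi, IsPOVM (Nb yi)) ∧
      ∀ xi yi ai bi, (P xi yi ai bi : ℂ) = (ρ * (M xi ai ⊗ₖ Nb yi bi)).trace

/-- Realization by a pure state `ψ` (with `ρ = |ψ⟩⟨ψ|`) and local POVMs, with local
Hilbert space dimensions `(dA, dB)`. -/
def RealizesBiPure (nx ny na nb dA dB : ℕ)
    (P : Fin nx → Fin ny → Fin na → Fin nb → ℝ) : Prop :=
  ∃ ψ : Fin dA × Fin dB → ℂ,
    (∑ p, Complex.normSq (ψ p)) = 1 ∧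
    ∃ (M : Fin nx → Fin na → Matrix (Fin dA) (Fin dA) ℂ)
      (Nb : Fin ny → Fin nb → Matrix (Fin dB) (Fin dB) ℂ),
      (∀ xi, IsPOVM (M xi)) ∧ (∀ yi, IsPOVM (Nb yi)) ∧
      ∀ xi yi ai bi, (P xi yi ai bi : ℂ) =
        (Matrix.vecMulVec ψ (star ψ) * (M xi ai ⊗ₖ Nb yi bi)).trace

/-- The set of all quantum correlations of the bipartite Bell scenario, with no
restriction on the local Hilbert space dimensions. -/
def QuantumSetBi (nx ny na nb : ℕ) : Set (Fin nx → Fin ny → Fin na → Fin nb → ℝ) :=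
  {P | ∃ dA dB, RealizesBi nx ny na nb dA dB P}

/-- A positive semidefinite matrix `R` has a Hermitian square root `T`, together with a Hermitian
pseudo-inverse `G` of `T`. -/
theorem exists_sqrt_pinv {n : Type*} [Fintype n] [DecidableEq n] {R : Matrix n n ℂ}
    (hR : R.PosSemidef) :
    ∃ T G : Matrix n n ℂ, Tᴴ = T ∧ Gᴴ = G ∧ T * T = R ∧ T * G = G * T ∧ T * G * T = T := by
  set φ := Unitary.conjStarAlgAut ℂ (Matrix n n ℂ) hR.1.eigenvectorUnitary with hφ
  set s : n → ℂ := fun i => ((√(hR.1.eigenvalues i) : ℝ) : ℂ) with hs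
  have hss : ∀ i, star (s i) = s i := fun i => Complex.conj_ofReal _
  have hsi : ∀ i, star (s i)⁻¹ = (s i)⁻¹ := fun i => by rw [star_inv₀, hss]
  refine ⟨φ (Matrix.diagonal s), φ (Matrix.diagonal fun i => (s i)⁻¹), ?_, ?_, ?_, ?_, ?_⟩
  · rw [← Matrix.star_eq_conjTranspose, ← map_star, Matrix.star_eq_conjTranspose,
      Matrix.diagonal_conjTranspose]
    congr 2; funext i; exact hss i
  · rw [← Matrix.star_eq_conjTranspose, ← map_star, Matrix.star_eq_conjTranspose,
      Matrix.diagonal_conjTranspose]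
    congr 2; funext i; exact hsi i
  · rw [← map_mul, Matrix.diagonal_mul_diagonal]
    conv_rhs => rw [hR.1.spectral_theorem]
    rw [hφ]
    congr 2; funext i
    simp only [hs, Function.comp]
    rw [← Complex.ofReal_mul, Real.mul_self_sqrt (hR.eigenvalues_nonneg i)]
    rfl
  · rw [← map_mul, ← map_mul, Matrix.diagonal_mul_diagonal, Matrix.diagonal_mul_diagonal]
    congr 2; funext i; exact mul_comm _ _
  · rw [← map_mul, ← map_mul, Matrix.diagonal_mul_diagonal, Matrix.diagonal_mul_diagonal]
    congr 2; funext i; exact mul_inv_mul_cancel (s i)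

/-- If positive semidefinite matrices `S a` sum to `R`, and `R * K = 0`, then `S a * K = 0`
for each `a`, since `S a ≤ R`. -/
theorem mul_eq_zero_of_sum {n : Type*} [Fintype n] [DecidableEq n] {O : Type*} [Fintype O]
    {S : O → Matrix n n ℂ} (hS : ∀ a, (S a).PosSemidef) {K : Matrix n n ℂ}
    (h : (∑ a, S a) * K = 0) (a : O) : S a * K = 0 := by
  have hpos : ∀ b, (Kᴴ * S b * K).PosSemidef := fun b => (hS b).conjTranspose_mul_mul_same K
  have hsum : ∑ b, (Kᴴ * S b * K).trace = 0 := by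
    rw [← Matrix.trace_sum, ← Finset.sum_mul, ← Finset.mul_sum, mul_assoc, h]; simp
  have htr : (Kᴴ * S a * K).trace = 0 :=
    (Finset.sum_eq_zero_iff_of_nonneg fun b _ => (hpos b).trace_nonneg).1 hsum a (Finset.mem_univ a)
  have h0 : Kᴴ * S a * K = 0 := (hpos a).trace_eq_zero_iff.1 htr
  obtain ⟨T, -, hT, -, hTT, -⟩ := exists_sqrt_pinv (hS a)
  have h1 : (T * K)ᴴ * (T * K) = 0 := by
    rw [Matrix.conjTranspose_mul, hT, ← h0, ← hTT]; simp only [mul_assoc]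
  rw [← hTT, mul_assoc, Matrix.conjTranspose_mul_self_eq_zero.1 h1, mul_zero]

/-- Every decomposition of `R` into positive semidefinite matrices arises from a POVM, sandwiched
between square roots of `R`. -/
theorem exists_povm_of_sum {n : Type*} [Fintype n] [DecidableEq n] {O : Type*} [Fintype O]
    [Nonempty O] {R T G : Matrix n n ℂ}
    (hT : Tᴴ = T) (hG : Gᴴ = G) (hTT : T * T = R) (hTG : T * G = G * T) (hTGT : T * G * T = T)
    {S : O → Matrix n n ℂ} (hS : ∀ a, (S a).PosSemidef) (hsum : ∑ a, S a = R) :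
    ∃ E : O → Matrix n n ℂ, IsPOVM E ∧ ∀ a, S a = T * E a * T := by
  classical
  -- `1 - T * G` is the orthogonal projection onto the kernel of `R`.
  obtain ⟨K, hKdef⟩ : ∃ K : Matrix n n ℂ, K = 1 - T * G := ⟨_, rfl⟩
  have hK : Kᴴ = K := by
    rw [hKdef, Matrix.conjTranspose_sub, Matrix.conjTranspose_mul, hT, hG, Matrix.conjTranspose_one,
      hTG]
  have hTK : T * K = 0 := by
    rw [hKdef, mul_sub, mul_one, hTG, ← mul_assoc, hTGT, sub_self]
  have hKK : K * K = K := by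
    conv_lhs => enter [1]; rw [hKdef]
    rw [sub_mul, one_mul, hTG, mul_assoc, hTK, mul_zero, sub_zero]
  have hSK : ∀ a, S a * K = 0 := fun a => by
    apply mul_eq_zero_of_sum hS
    rw [hsum, ← hTT, mul_assoc, hTK, mul_zero]
  have hSr : ∀ a, S a * (T * G) = S a := fun a => by
    have := hSK a
    rw [hKdef, mul_sub, mul_one, sub_eq_zero] at this
    exact this.symm
  have hSl : ∀ a, (T * G) * S a = S a := fun a => by
    have := congrArg Matrix.conjTranspose (hSr a)
    rwa [Matrix.conjTranspose_mul, Matrix.conjTranspose_mul, hT, hG, (hS a).1.eq, ← hTG] at this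
  have hKpos : K.PosSemidef := by
    have := Matrix.posSemidef_conjTranspose_mul_self K
    rwa [hK, hKK] at this
  obtain ⟨a₀⟩ := ‹Nonempty O›
  refine ⟨fun a => G * S a * G + if a = a₀ then K else 0, ⟨fun a => ?_, ?_⟩, fun a => ?_⟩
  · have h1 : (G * S a * G).PosSemidef := by
      have := (hS a).conjTranspose_mul_mul_same G
      rwa [hG] at this
    refine h1.add ?_
    split_ifs
    · exact hKpos
    · exact Matrix.PosSemidef.zero
  · have h1 : G * (T * T) * G = T * G := by
      calc G * (T * T) * G = (G * T) * (T * G) := by simp only [mul_assoc]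
        _ = (T * G * T) * G := by rw [← hTG]; simp only [mul_assoc]
        _ = T * G := by rw [hTGT]
    rw [Finset.sum_add_distrib, ← Finset.sum_mul, ← Finset.mul_sum, hsum, ← hTT, h1]
    simp [hKdef]
  · have h2 : T * (if a = a₀ then K else 0) = 0 := by split_ifs <;> simp [hTK]
    rw [mul_add, h2, add_zero]
    calc S a = (T * G) * (S a * (T * G)) := by rw [hSr, hSl]
      _ = T * (G * S a * G) * T := by rw [hTG]; nth_rw 1 [← hTG]; simp only [mul_assoc]

/-- The partial trace `Tr_A [ρ (A ⊗ 1)]`: the unnormalised state of the second system conditioned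
on the effect `A` on the first. -/
def steer {m n : Type*} [Fintype m] (ρ : Matrix (m × n) (m × n) ℂ) (A : Matrix m m ℂ) :
    Matrix n n ℂ :=
  Matrix.of fun j l => ∑ i, ∑ k, ρ (i, j) (k, l) * A k i

theorem steer_sum {m n O : Type*} [Fintype m] [Fintype O]
    (ρ : Matrix (m × n) (m × n) ℂ) (A : O → Matrix m m ℂ) :
    ∑ a, steer ρ (A a) = steer ρ (∑ a, A a) := by
  ext j l
  simp only [Matrix.sum_apply, steer, Matrix.of_apply, Finset.mul_sum]
  rw [Finset.sum_comm]
  exact Finset.sum_congr rfl fun i _ => Finset.sum_comm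

theorem trace_steer_mul {m n : Type*} [Fintype m] [Fintype n]
    (ρ : Matrix (m × n) (m × n) ℂ) (A : Matrix m m ℂ) (N : Matrix n n ℂ) :
    (steer ρ A * N).trace = (ρ * (A ⊗ₖ N)).trace := by
  simp only [Matrix.trace, Matrix.diag, Matrix.mul_apply, steer, Matrix.of_apply,
    Fintype.sum_prod_type, Matrix.kroneckerMap_apply, Finset.sum_mul]
  conv_rhs => rw [Finset.sum_comm]
  refine Finset.sum_congr rfl fun j _ => ?_
  conv_rhs => enter [2, i]; rw [Finset.sum_comm]
  rw [Finset.sum_comm]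
  simp only [mul_assoc]

theorem trace_steer_one {m n : Type*} [Fintype m] [Fintype n] [DecidableEq m] [DecidableEq n]
    (ρ : Matrix (m × n) (m × n) ℂ) : (steer ρ 1).trace = ρ.trace := by
  rw [← mul_one (steer ρ 1), trace_steer_mul, Matrix.one_kronecker_one, mul_one]

/-- Writing `A = T * T` with `T` Hermitian, `steer ρ A` is the partial trace of the positive
semidefinite matrix `(T ⊗ 1) ρ (T ⊗ 1)ᴴ`. -/
theorem steer_posSemidef {m n : Type*} [Fintype m] [Fintype n] [DecidableEq m] [DecidableEq n]
    {ρ : Matrix (m × n) (m × n) ℂ} (hρ : ρ.PosSemidef) {A : Matrix m m ℂ} (hA : A.PosSemidef) :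
    (steer ρ A).PosSemidef := by
  obtain ⟨T, -, hT, -, hTT, -⟩ := exists_sqrt_pinv hA
  have key : steer ρ A = ∑ c, ((T ⊗ₖ (1 : Matrix n n ℂ)) * ρ * (T ⊗ₖ (1 : Matrix n n ℂ))ᴴ).submatrix
      (fun j => (c, j)) (fun j => (c, j)) := by
    ext j l
    simp only [Matrix.conjTranspose_kronecker, hT, Matrix.conjTranspose_one]
    simp only [steer, Matrix.of_apply, ← hTT, Matrix.mul_apply, Matrix.sum_apply,
      Matrix.submatrix_apply, Fintype.sum_prod_type, Matrix.kroneckerMap_apply, Matrix.one_apply]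
    simp only [mul_ite, mul_one, mul_zero, ite_mul, zero_mul, Finset.sum_ite_eq,
      Finset.mem_univ, if_true, Finset.mul_sum, Finset.sum_mul, Finset.sum_ite_eq']
    conv_rhs => enter [2, c]; rw [Finset.sum_comm]
    conv_rhs => rw [Finset.sum_comm]
    refine Finset.sum_congr rfl fun i _ => ?_
    rw [Finset.sum_comm]
    refine Finset.sum_congr rfl fun c _ => Finset.sum_congr rfl fun k _ => ?_
    ring
  rw [key]
  exact Matrix.posSemidef_sum _ fun c _ => (hρ.mul_mul_conjTranspose_same _).submatrix _

/-- Expectation of a product observable in the pure state with coefficient matrix `T`: the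
transpose comes from moving Alice's operator to Bob's side. -/
theorem trace_pure {n : Type*} [Fintype n] {T : Matrix n n ℂ} (hT : Tᴴ = T) (E N : Matrix n n ℂ) :
    (Matrix.vecMulVec (fun p : n × n => T p.2 p.1) (star fun p : n × n => T p.2 p.1) *
      (Eᵀ ⊗ₖ N)).trace = (T * E * T * N).trace := by
  have hT' : ∀ i j, star (T i j) = T j i := fun i j => by
    rw [← Matrix.conjTranspose_apply, hT]
  simp only [Matrix.trace, Matrix.diag, Matrix.mul_apply, Matrix.vecMulVec_apply, Pi.star_apply,
    hT', Fintype.sum_prod_type, Matrix.kroneckerMap_apply, Matrix.transpose_apply, Finset.sum_mul]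
  rw [Finset.sum_comm]
  refine Finset.sum_congr rfl fun j _ => ?_
  rw [Finset.sum_comm_cycle]
  refine Finset.sum_congr rfl fun l _ => ?_
  rw [Finset.sum_comm]
  refine Finset.sum_congr rfl fun k _ => Finset.sum_congr rfl fun i _ => ?_
  ring

/-- Exchanging the two parties. -/
theorem RealizesBi.swap {nx ny na nb dA dB : ℕ} {P : Fin nx → Fin ny → Fin na → Fin nb → ℝ}
    (h : RealizesBi nx ny na nb dA dB P) :
    RealizesBi ny nx nb na dB dA (fun y x b a => P x y a b) := by
  obtain ⟨ρ, ⟨hρ, htr⟩, M, N, hM, hN, hP⟩ := h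
  have hsub : ∀ X : Matrix (Fin dA × Fin dB) (Fin dA × Fin dB) ℂ,
      (X.submatrix Prod.swap Prod.swap).trace = X.trace := fun X =>
    (Equiv.prodComm (Fin dB) (Fin dA)).sum_comp fun p => X p p
  refine ⟨ρ.submatrix Prod.swap Prod.swap, ⟨hρ.submatrix _, (hsub ρ).trans htr⟩, N, M, hN, hM,
    fun y x b a => ?_⟩
  have hk : N y b ⊗ₖ M x a = (M x a ⊗ₖ N y b).submatrix Prod.swap Prod.swap := by
    ext p q
    simp [mul_comm]
  rw [hP, hk, ← hsub]
  congr 1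
  exact (Matrix.submatrix_mul_equiv ρ (M x a ⊗ₖ N y b) Prod.swap
    (Equiv.prodComm (Fin dB) (Fin dA)) Prod.swap).symm

/-- Alice's dimension can be replaced by Bob's. -/
theorem RealizesBi.reduce {nx ny na nb dA dB : ℕ} {P : Fin nx → Fin ny → Fin na → Fin nb → ℝ}
    (h : RealizesBi nx ny na nb dA dB P) : RealizesBi nx ny na nb dB dB P := by
  obtain ⟨ρ, ⟨hρ, htr⟩, M, N, hM, hN, hP⟩ := h
  obtain ⟨T, G, hT, hG, hTT, hTG, hTGT⟩ :=
    exists_sqrt_pinv (steer_posSemidef hρ (Matrix.PosSemidef.one (n := Fin dA) (R := ℂ)))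
  have hE : ∀ x, ∃ E : Fin na → Matrix (Fin dB) (Fin dB) ℂ,
      IsPOVM E ∧ ∀ a, steer ρ (M x a) = T * E a * T := fun x => by
    -- A POVM without outcomes would force `1 = 0`, hence `dA = 0` and `ρ.trace = 0`.
    have : Nonempty (Fin na) := by
      by_contra hne
      rw [not_nonempty_iff] at hne
      have h1 : (1 : Matrix (Fin dA) (Fin dA) ℂ) = 0 := by rw [← (hM x).2]; simp
      have h2 : steer ρ (0 : Matrix (Fin dA) (Fin dA) ℂ) = 0 := by
        ext; simp [steer]
      rw [← trace_steer_one, h1, h2] at htr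
      simp at htr
    exact exists_povm_of_sum hT hG hTT hTG hTGT (fun a => steer_posSemidef hρ ((hM x).1 a))
      (by rw [steer_sum, (hM x).2])
  choose E hE hS using hE
  refine ⟨Matrix.vecMulVec (fun p : Fin dB × Fin dB => T p.2 p.1)
      (star fun p : Fin dB × Fin dB => T p.2 p.1),
    ⟨Matrix.posSemidef_vecMulVec_self_star _, ?_⟩, fun x a => (E x a)ᵀ, N,
    fun x => ⟨fun a => ((hE x).1 a).transpose, ?_⟩, hN, fun x y a b => ?_⟩
  · have := trace_pure hT 1 1
    rwa [Matrix.transpose_one, Matrix.one_kronecker_one, mul_one, mul_one, mul_one, hTT,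
      trace_steer_one, htr] at this
  · rw [← Matrix.transpose_sum, (hE x).2, Matrix.transpose_one]
  · rw [trace_pure hT, ← hS, trace_steer_mul, hP]

theorem realizable_with_min_dimensions (nx ny na nb dA dB : ℕ)
    (P : Fin nx → Fin ny → Fin na → Fin nb → ℝ)
    (h : ∃ dA' ≤ dA, ∃ dB' ≤ dB, RealizesBi nx ny na nb dA' dB' P) :
    ∃ dA' ≤ min dA dB, ∃ dB' ≤ min dA dB, RealizesBi nx ny na nb dA' dB' P := by
  obtain ⟨dA', hA, dB', hB, h⟩ := h
  rcases le_total dA dB with hle | hle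
  · rw [min_eq_left hle]
    exact ⟨dA', hA, dA', hA, h.swap.reduce.swap⟩
  · rw [min_eq_right hle]
    exact ⟨dB', hB, dB', hB, h.reduce⟩
end
end
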